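/- arXiv:2004.01484 — 3 statements merged into one kernel-verified Lean document; each statement's English description precedes it below -/
import Mathlib

section
/- (Novikov 1954) There exists a finitely presented group with unsolvable conjugacy problem: there exist a natural number m and a finite set rels of elements of the free group on Fin m such that, letting G denote the quotient of FreeGroup (Fin m) by the normal closure of rels, the predicate on pairs (l₁, l₂) of lists in List (Fin m × Bool) given by 'there exists g ∈ G with g · (image of FreeGroup.mk l₁ in G) · g⁻¹ = image of FreeGroup.mk l₂ in G' is not a computable predicate (¬ ComputablePred). -/
/-!
Conjugacy in an HNN extension of a lattice `A → ℤ` can simulate a machine that acts on integer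
registers by affine maps. Write a configuration as the vector formed by its state (a standard basis
vector) and its register contents; each rule of the machine is then an isomorphism between two
subgroups of the lattice, realized by one stable letter, so that a configuration is conjugate to
every configuration it leads to.

Conversely, let `T` be the set of vectors that are not the vector of a configuration from which the
fixed configuration `d` cannot be reached. The rules preserve membership in `T`, and `T` contains
the subgroup generated by `d`. The lattice acts on a disjoint union of sufficiently many coset
spaces by subgroups contained in `T`, and, comparing orbits and stabilizers, this action extends to
the HNN extension. As `d` fixes a point, so does each conjugate of `d`; if that conjugate is a
lattice vector, it therefore lies in `T`, and hence can reach `d` if it is a configuration.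

A stack machine becomes affine when a stack is encoded as a number with its top symbol as last
digit, and the halting problem provides a stack machine with undecidable reachability.
-/

section EquivariantEquiv

open AddAction

/-- The set `X` regarded as a `P`-set through `α : P →+ V`. -/
def PulledBack {P V : Type*} [AddMonoid P] [AddMonoid V] (_α : P →+ V) (X : Type*) : Type _ := X

instance {P V X : Type*} [AddMonoid P] [AddMonoid V] [AddAction V X] (α : P →+ V) :
    AddAction P (PulledBack α X) :=
  AddAction.compHom X α

theorem exists_equivariant_equiv_of_stabilizer_out_eq {Γ X Y : Type*} [AddGroup Γ] [AddAction Γ X]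
    [AddAction Γ Y] (e : orbitRel.Quotient Γ X ≃ orbitRel.Quotient Γ Y)
    (he : ∀ ω, stabilizer Γ ω.out = stabilizer Γ (e ω).out) :
    ∃ f : X ≃ Y, ∀ (g : Γ) x, f (g +ᵥ x) = g +ᵥ f x := by
  let sX := selfEquivSigmaOrbitsQuotientStabilizer Γ X
  let sY := selfEquivSigmaOrbitsQuotientStabilizer Γ Y
  let f : X ≃ Y := sX.trans <| (Equiv.sigmaCongr e fun ω =>
    AddSubgroup.quotientEquivOfEq (he ω)).trans sY.symm
  have f_out (g : Γ) (ω : orbitRel.Quotient Γ X) : f (g +ᵥ ω.out) = g +ᵥ (e ω).out := by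
    have : g +ᵥ ω.out = sX.symm ⟨ω, (g : Γ ⧸ stabilizer Γ ω.out)⟩ := rfl
    simp only [f, this, Equiv.trans_apply, Equiv.apply_symm_apply]
    rfl
  refine ⟨f, fun g x => ?_⟩
  obtain ⟨⟨ω, q⟩, rfl⟩ := sX.symm.surjective x
  obtain ⟨h, rfl⟩ := QuotientAddGroup.mk_surjective q
  change f (g +ᵥ (h +ᵥ ω.out)) = g +ᵥ f (h +ᵥ ω.out)
  rw [f_out, ← add_vadd, f_out, add_vadd]

variable {Γ X Y : Type*} [AddCommGroup Γ] [AddAction Γ X] [AddAction Γ Y]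

theorem stabilizer_quotient_out (x : X) :
    stabilizer Γ (Quotient.mk (orbitRel Γ X) x).out = stabilizer Γ x := by
  obtain ⟨g, hg⟩ : ∃ g : Γ, g +ᵥ x = (Quotient.mk (orbitRel Γ X) x).out :=
    Quotient.mk_out (s := orbitRel Γ X) x
  rw [← hg, stabilizer_vadd_eq_right]

theorem exists_equivariant_equiv_of_orbit_injections (f : X → Y) (g : Y → X)
    (f_inj : (fun x => Quotient.mk (orbitRel Γ Y) (f x)).Injective)
    (g_inj : (fun y => Quotient.mk (orbitRel Γ X) (g y)).Injective)
    (f_stab : ∀ x, stabilizer Γ (f x) = stabilizer Γ x)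
    (g_stab : ∀ y, stabilizer Γ (g y) = stabilizer Γ y) :
    ∃ e : X ≃ Y, ∀ (γ : Γ) x, e (γ +ᵥ x) = γ +ᵥ e x := by
  -- Schröder–Bernstein for orbits; as `Γ` is abelian, the stabilizer is constant along an orbit.
  obtain ⟨h, h_bij, h_stab⟩ := Function.Embedding.schroeder_bernstein_of_rel
    (f_inj.comp Quotient.out_injective) (g_inj.comp Quotient.out_injective)
    (fun ω ω' => stabilizer Γ ω.out = stabilizer Γ ω'.out)
    (fun ω => by rw [Function.comp_apply, stabilizer_quotient_out, f_stab])
    (fun ω => by rw [Function.comp_apply, stabilizer_quotient_out, g_stab])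
  exact exists_equivariant_equiv_of_stabilizer_out_eq (Equiv.ofBijective h h_bij) h_stab

end EquivariantEquiv

section CosetSpace

variable {V P : Type*} [AddCommGroup V] [AddCommGroup P] {T : Set V}

/-- The universal transitive `V`-sets with stabilizer contained in `T`: the disjoint union of all
coset spaces `V ⧸ L` with `L ⊆ T`. -/
abbrev CosetSpace (T : Set V) : Type _ :=
  Σ L : {L : AddSubgroup V // (L : Set V) ⊆ T}, V ⧸ L.1

/-- Many copies of `CosetSpace T`. Labelling the copies by lists of points of `CosetSpace T` makes
the set of points embed into the set of labels, by prepending a point to its own label. -/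
abbrev LabelledCosetSpace (T : Set V) : Type _ :=
  Σ i : {L : AddSubgroup V // (L : Set V) ⊆ T} × List (CosetSpace T), V ⧸ i.1.1

theorem vadd_eq_self_iff_mem (v : V) (x : LabelledCosetSpace T) : v +ᵥ x = x ↔ v ∈ x.1.1.1 := by
  obtain ⟨i, q⟩ := x
  obtain ⟨w, rfl⟩ := QuotientAddGroup.mk_surjective q
  rw [Sigma.vadd_mk, Sigma.mk.injEq, heq_eq_eq, eq_self, true_and]
  change ((v + w : V) : V ⧸ i.1.1) = w ↔ _
  rw [eq_comm, QuotientAddGroup.eq, neg_add_cancel_comm_assoc]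

theorem stabilizer_pulledBack (α : P →+ V) (x : PulledBack α (LabelledCosetSpace T)) :
    AddAction.stabilizer P x = x.1.1.1.comap α :=
  AddSubgroup.ext fun p => vadd_eq_self_iff_mem (α p) x

/-- One point in each `β`-orbit of a set of coset spaces indexed by the points of the `α`-orbits,
with the same stabilizer in `P`. -/
def transportPoint (α β : P →+ V) (hT : ∀ p, α p ∈ T ↔ β p ∈ T)
    (x : PulledBack α (LabelledCosetSpace T)) : PulledBack β (LabelledCosetSpace T) :=
  ⟨(⟨(x.1.1.1.comap α).map β, by
      rintro _ ⟨p, hp, rfl⟩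
      exact (hT p).1 (x.1.1.2 hp)⟩, ⟨x.1.1, x.2⟩ :: x.1.2), 0⟩

theorem stabilizer_transportPoint (α β : P →+ V) (hβ : Function.Injective β)
    (hT : ∀ p, α p ∈ T ↔ β p ∈ T) (x : PulledBack α (LabelledCosetSpace T)) :
    AddAction.stabilizer P (transportPoint α β hT x) = AddAction.stabilizer P x := by
  rw [stabilizer_pulledBack, stabilizer_pulledBack]
  exact AddSubgroup.comap_map_eq_self_of_injective hβ _

theorem transportPoint_orbit_injective (α β : P →+ V) (hT : ∀ p, α p ∈ T ↔ β p ∈ T) :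
    Function.Injective fun x =>
      Quotient.mk (AddAction.orbitRel P _) (transportPoint α β hT x) := by
  intro x y hxy
  obtain ⟨p, hp⟩ := Quotient.exact hxy
  have labels_eq := List.cons.inj (congrArg (fun z : LabelledCosetSpace T => z.1.2) hp).symm
  obtain ⟨⟨L, l⟩, q⟩ := x
  obtain ⟨⟨L', l'⟩, q'⟩ := y
  obtain ⟨h, rfl : l = l'⟩ := labels_eq
  obtain ⟨rfl, rfl⟩ := Sigma.mk.inj h
  rfl

theorem exists_perm_intertwining (α β : P →+ V) (hα : Function.Injective α)
    (hβ : Function.Injective β) (hT : ∀ p, α p ∈ T ↔ β p ∈ T) :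
    ∃ r : Equiv.Perm (LabelledCosetSpace T), ∀ p x, r (α p +ᵥ x) = β p +ᵥ r x :=
  exists_equivariant_equiv_of_orbit_injections
    (X := PulledBack α (LabelledCosetSpace T)) (Y := PulledBack β (LabelledCosetSpace T))
    (transportPoint α β hT) (transportPoint β α fun p => (hT p).symm)
    (transportPoint_orbit_injective ..) (transportPoint_orbit_injective ..)
    (stabilizer_transportPoint α β hβ hT) (stabilizer_transportPoint β α hα _)

end CosetSpace

section LatticeHNN

open FreeGroup (of)
open scoped commutatorElement

variable {A J P : Type*} [Fintype A] [AddCommGroup P]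

/-- A word, in the letters indexed by `A`, for the vector `v` of the lattice `A → ℤ`. -/
noncomputable def vecWord (v : A → ℤ) : FreeGroup (A ⊕ J) :=
  (Finset.univ.toList.map fun a => of (Sum.inl a) ^ v a).prod

theorem map_vecWord [DecidableEq A] {G : Type*} [Group G] (F : FreeGroup (A ⊕ J) →* G)
    (W : (A → ℤ) →+ Additive G)
    (hW : ∀ a, (W (Pi.single a 1)).toMul = F (of (Sum.inl a))) (v : A → ℤ) :
    F (vecWord v) = (W v).toMul := by
  have v_eq : v = (Finset.univ.toList.map fun a => v a • Pi.single a (1 : ℤ)).sum := by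
    refine Eq.trans ?_ (Finset.sum_map_toList ..).symm
    simp only [← Pi.single_smul, smul_eq_mul, mul_one, Finset.univ_sum_single]
  conv_rhs => rw [v_eq, map_list_sum, toMul_list_sum, List.map_map, List.map_map]
  rw [vecWord, map_list_prod, List.map_map]
  congr! 2
  funext a
  simp only [Function.comp_apply, map_zpow, map_zsmul, toMul_zsmul, hW]

/-- Relators presenting the HNN extension of the lattice `A → ℤ` in which the stable letter indexed
by `j` conjugates `α j p` into `β j p`; by additivity it suffices to let `p` run over a set `S` of
generators of `P`. -/
def hnnRels (α β : J → P →+ (A → ℤ)) (S : Set P) : Set (FreeGroup (A ⊕ J)) :=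
  Set.range (fun a : A × A => ⁅(of (Sum.inl a.1) : FreeGroup (A ⊕ J)), of (Sum.inl a.2)⁆) ∪
    Set.image2 (fun j p => of (Sum.inr j) * vecWord (α j p) * (of (Sum.inr j))⁻¹ *
      (vecWord (β j p))⁻¹) Set.univ S

variable (α β : J → P →+ (A → ℤ)) {S : Set P}

theorem finite_hnnRels [Finite J] (hS : S.Finite) : (hnnRels α β S).Finite :=
  (Set.finite_range _).union (Set.Finite.image2 _ Set.finite_univ hS)

theorem pairwise_addCommute_zmultiplesHom_of_inl :
    Pairwise fun a b : A => ∀ m n : ℤ, AddCommute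
      (zmultiplesHom (Additive (PresentedGroup (hnnRels α β S)))
        (.ofMul (PresentedGroup.of (Sum.inl a))) m)
      (zmultiplesHom _ (.ofMul (PresentedGroup.of (Sum.inl b))) n) := by
  intro a b _ m n
  have relator : ⁅of (Sum.inl a), of (Sum.inl b)⁆ ∈ hnnRels α β S :=
    Set.mem_union_left _ ⟨(a, b), rfl⟩
  have commute : Commute (PresentedGroup.of (rels := hnnRels α β S) (Sum.inl a))
      (PresentedGroup.of (Sum.inl b)) :=
    commutatorElement_eq_one_iff_commute.1 (PresentedGroup.one_of_mem relator)
  exact congrArg Additive.ofMul (commute.zpow_zpow m n)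

variable (S) in
/-- The inclusion of the base group of the HNN extension presented by `hnnRels`. -/
noncomputable def latticeHom : (A → ℤ) →+ Additive (PresentedGroup (hnnRels α β S)) :=
  AddMonoidHom.noncommPiCoprod
    (fun a => zmultiplesHom _ (.ofMul (PresentedGroup.of (Sum.inl a))))
    (pairwise_addCommute_zmultiplesHom_of_inl α β)

theorem latticeHom_single [DecidableEq A] (a : A) :
    (latticeHom α β S (Pi.single a 1)).toMul = PresentedGroup.of (Sum.inl a) := by
  rw [latticeHom, AddMonoidHom.noncommPiCoprod_single, zmultiplesHom_apply, one_zsmul, toMul_ofMul]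

theorem mk_vecWord (v : A → ℤ) :
    PresentedGroup.mk (hnnRels α β S) (vecWord v) = (latticeHom α β S v).toMul := by
  classical
  exact map_vecWord _ _ (latticeHom_single α β) v

theorem stableLetter_conj_latticeHom (hS : AddSubgroup.closure S = ⊤) (j : J) (p : P) :
    PresentedGroup.of (Sum.inr j) * (latticeHom α β S (α j p)).toMul *
      (PresentedGroup.of (Sum.inr j))⁻¹ = (latticeHom α β S (β j p)).toMul := by
  let t : PresentedGroup (hnnRels α β S) := PresentedGroup.of (Sum.inr j)
  have eqOn_generators : Set.EqOn ((MulAut.conj t).toMonoidHom.toAdditive.comp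
      ((latticeHom α β S).comp (α j))) ((latticeHom α β S).comp (β j)) S := by
    intro p hp
    have relator := PresentedGroup.one_of_mem (rels := hnnRels α β S)
      (Set.mem_union_right _ (Set.mem_image2_of_mem (Set.mem_univ j) hp))
    simp only [map_mul, map_inv, mk_vecWord, mul_inv_eq_one] at relator
    exact relator
  exact DFunLike.congr_fun (AddMonoidHom.eq_of_eqOn_dense hS eqOn_generators) p

theorem exists_hom_perm_latticeHom_apply {T : Set (A → ℤ)}
    (hα : ∀ j, Function.Injective (α j)) (hβ : ∀ j, Function.Injective (β j))
    (hT : ∀ j p, α j p ∈ T ↔ β j p ∈ T) :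
    ∃ F : PresentedGroup (hnnRels α β S) →* Equiv.Perm (LabelledCosetSpace T),
      ∀ (v : A → ℤ) x, F (latticeHom α β S v).toMul x = v +ᵥ x := by
  classical
  choose r hr using fun j => exists_perm_intertwining (α j) (β j) (hα j) (hβ j) (hT j)
  let ρ := AddAction.toPermHom (A → ℤ) (LabelledCosetSpace T)
  let f : A ⊕ J → Equiv.Perm (LabelledCosetSpace T) :=
    Sum.elim (fun a => (ρ (Pi.single a 1)).toMul) r
  have lift_vecWord (v : A → ℤ) : FreeGroup.lift f (vecWord v) = (ρ v).toMul :=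
    map_vecWord _ ρ (fun a => (FreeGroup.lift_apply_of ..).symm) v
  have lift_rels : ∀ w ∈ hnnRels α β S, FreeGroup.lift f w = 1 := by
    rintro _ (⟨⟨a, b⟩, rfl⟩ | ⟨j, -, p, -, rfl⟩)
    · simp only [map_commutatorElement, FreeGroup.lift_apply_of, f, Sum.elim_inl,
        commutatorElement_eq_one_iff_mul_comm, ← toMul_add, ← map_add, add_comm]
    · simp only [map_mul, map_inv, lift_vecWord, FreeGroup.lift_apply_of, mul_inv_eq_iff_eq_mul,
        one_mul]
      exact Equiv.ext (hr j p)
  refine ⟨PresentedGroup.toGroup lift_rels, fun v x => ?_⟩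
  rw [← mk_vecWord]
  exact DFunLike.congr_fun (lift_vecWord v) x

theorem mem_of_isConj_latticeHom {T : Set (A → ℤ)} (hα : ∀ j, Function.Injective (α j))
    (hβ : ∀ j, Function.Injective (β j)) (hT : ∀ j p, α j p ∈ T ↔ β j p ∈ T) {u v : A → ℤ}
    (hv : (AddSubgroup.zmultiples v : Set (A → ℤ)) ⊆ T)
    (huv : IsConj (latticeHom α β S v).toMul (latticeHom α β S u).toMul) : u ∈ T := by
  obtain ⟨F, F_latticeHom⟩ := exists_hom_perm_latticeHom_apply α β hα hβ hT
  obtain ⟨g, hg⟩ := isConj_iff.1 (F.map_isConj huv)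
  rw [mul_inv_eq_iff_eq_mul] at hg
  let x : LabelledCosetSpace T := ⟨(⟨AddSubgroup.zmultiples v, hv⟩, []), 0⟩
  have v_fixes : v +ᵥ x = x := (vadd_eq_self_iff_mem v x).2 (AddSubgroup.mem_zmultiples v)
  have u_fixes : u +ᵥ g x = g x := calc
    u +ᵥ g x = F (latticeHom α β S u).toMul (g x) := (F_latticeHom u (g x)).symm
    _ = g (F (latticeHom α β S v).toMul x) := (DFunLike.congr_fun hg x).symm
    _ = g x := by rw [F_latticeHom, v_fixes]
  exact (g x).1.1.2 ((vadd_eq_self_iff_mem u (g x)).1 u_fixes)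

end LatticeHNN

section IterateReaches

variable {X Y : Type*} {f : X → X} {g : Y → Y}

/-- Iterating `f` from `x` leads to `y`. -/
def IterateReaches (f : X → X) (x y : X) : Prop :=
  ∃ n, f^[n] x = y

theorem IterateReaches.of_apply {x y : X} : IterateReaches f (f x) y → IterateReaches f x y := by
  rintro ⟨n, hn⟩
  exact ⟨n + 1, hn⟩

theorem IterateReaches.trans {x y z : X} :
    IterateReaches f x y → IterateReaches f y z → IterateReaches f x z := by
  rintro ⟨m, rfl⟩ ⟨n, hn⟩
  exact ⟨n + m, by rwa [Function.iterate_add_apply]⟩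

theorem iterateReaches_apply_iff {y : X} (hy : f y = y) (x : X) :
    IterateReaches f (f x) y ↔ IterateReaches f x y := by
  refine ⟨.of_apply, ?_⟩
  rintro ⟨n, hn⟩
  exact ⟨n, by rw [← Function.iterate_succ_apply, Function.iterate_succ_apply', hn, hy]⟩

theorem iterateReaches_iff_of_semiconj {φ : X → Y} (h : Function.Semiconj φ f g)
    (hφ : Function.Injective φ) (x y : X) :
    IterateReaches g (φ x) (φ y) ↔ IterateReaches f x y :=
  exists_congr fun n => by rw [← h.iterate_right n, hφ.eq_iff]

end IterateReaches

/-- A machine with control states `Q` and integer registers `K`. In state `q` it divides the content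
of `register q` by `b`; for quotient `z` and remainder `d`, the new content is
`z * slope q d + offset q d` and the new state is `next q d`. -/
structure AffineMachine (b : ℕ) (Q K : Type*) where
  register : Q → K
  next : Q → Fin b → Q
  slope : Q → Fin b → ℤ
  offset : Q → Fin b → ℤ
  slope_ne_zero : ∀ q d, slope q d ≠ 0

namespace AffineMachine

variable {b : ℕ} {Q K : Type*}

section Lattice

variable [DecidableEq Q]

/-- A configuration as a vector: the state in unary, then the contents of the registers. -/
def vec (c : Q × (K → ℤ)) : Q ⊕ K → ℤ :=
  Sum.elim (Pi.single c.1 1) c.2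

theorem eq_and_eq_one_of_single_eq_single {q q' : Q} {s : ℤ}
    (h : (Pi.single q s : Q → ℤ) = Pi.single q' 1) : q = q' ∧ s = 1 := by
  have h_at := congrFun h q'
  rw [Pi.single_eq_same] at h_at
  obtain rfl | hq := eq_or_ne q q'
  · exact ⟨rfl, by rwa [Pi.single_eq_same] at h_at⟩
  · rw [Pi.single_eq_of_ne' hq] at h_at
    exact absurd h_at zero_ne_one

theorem vec_injective : Function.Injective (vec : Q × (K → ℤ) → Q ⊕ K → ℤ) := by
  intro c c' h
  obtain ⟨states_eq, registers_eq⟩ := Sum.elim_eq_iff.1 h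
  exact Prod.ext (eq_and_eq_one_of_single_eq_single states_eq).1 registers_eq

theorem eq_one_of_zsmul_vec_eq_vec {c c' : Q × (K → ℤ)} {s : ℤ} (h : s • vec c = vec c') :
    s = 1 := by
  have states_eq : (Pi.single c.1 s : Q → ℤ) = Pi.single c'.1 1 := by
    rw [← mul_one s, ← smul_eq_mul, Pi.single_smul]
    exact congrArg (· ∘ Sum.inl) h
  exact (eq_and_eq_one_of_single_eq_single states_eq).2

variable [DecidableEq K]

/-- The linear map that sends `(1, w)` to the vector of the configuration with state `q` and
registers `w`, the content `w k` being replaced by `w k * a + c`. -/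
def affineSide (q : Q) (k : K) (a c : ℤ) : ℤ × (K → ℤ) →+ (Q ⊕ K → ℤ) where
  toFun p := Sum.elim (Pi.single q p.1) (Function.update p.2 k (p.2 k * a + p.1 * c))
  map_zero' := by simp
  map_add' p p' := by
    rw [← Sum.elim_add_add, ← Pi.single_add, ← Function.update_add]
    simp only [Prod.fst_add, Prod.snd_add, Pi.add_apply]
    congr 2
    ring

theorem affineSide_one (q : Q) (k : K) (a c : ℤ) (w : K → ℤ) :
    affineSide q k a c (1, w) = vec (q, Function.update w k (w k * a + c)) := by
  simp only [affineSide, AddMonoidHom.coe_mk, ZeroHom.coe_mk, one_mul, vec]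

theorem affineSide_injective (q : Q) (k : K) {a : ℤ} (c : ℤ) (ha : a ≠ 0) :
    Function.Injective (affineSide q k a c) := by
  rintro ⟨s, w⟩ ⟨s', w'⟩ h
  obtain ⟨states_eq, registers_eq⟩ := Sum.elim_eq_iff.1 h
  obtain rfl : s = s' := Pi.single_injective q states_eq
  refine Prod.ext rfl (funext fun i => ?_)
  have h_at := congrFun registers_eq i
  obtain rfl | hi := eq_or_ne i k
  · simpa [ha] using h_at
  · simpa [hi] using h_at

theorem eq_one_of_affineSide_eq_vec {q : Q} {k : K} {a c : ℤ} {p : ℤ × (K → ℤ)}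
    {C : Q × (K → ℤ)} (h : affineSide q k a c p = vec C) : p.1 = 1 :=
  (eq_and_eq_one_of_single_eq_single (Sum.elim_eq_iff.1 h).1).2

variable (M : AffineMachine b Q K)

/-- The left-hand side, as a linear map, of the rule for the state `qd.1` and the digit `qd.2`: at
`(1, w)` it is the vector of the state `qd.1` with the digit `qd.2` appended to `register qd.1`. -/
def ruleSource (qd : Q × Fin b) : ℤ × (K → ℤ) →+ (Q ⊕ K → ℤ) :=
  affineSide qd.1 (M.register qd.1) b qd.2

/-- The right-hand side of the rule with left-hand side `ruleSource`: one step of the machine takes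
`ruleSource qd (1, w)` to `ruleTarget qd (1, w)`. -/
def ruleTarget (qd : Q × Fin b) : ℤ × (K → ℤ) →+ (Q ⊕ K → ℤ) :=
  affineSide (M.next qd.1 qd.2) (M.register qd.1) (M.slope qd.1 qd.2) (M.offset qd.1 qd.2)

theorem ruleSource_injective [NeZero b] (qd : Q × Fin b) : Function.Injective (M.ruleSource qd) :=
  affineSide_injective _ _ _ (Nat.cast_ne_zero.2 (NeZero.ne b))

theorem ruleTarget_injective (qd : Q × Fin b) : Function.Injective (M.ruleTarget qd) :=
  affineSide_injective _ _ _ (M.slope_ne_zero _ _)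

end Lattice

section Step

variable [NeZero b] [DecidableEq K] (M : AffineMachine b Q K)

/-- One step of the machine on a configuration, a pair of a state and the register contents. -/
def step (c : Q × (K → ℤ)) : Q × (K → ℤ) :=
  let (z, d) := Int.divModEquiv b (c.2 (M.register c.1))
  (M.next c.1 d,
    Function.update c.2 (M.register c.1) (z * M.slope c.1 d + M.offset c.1 d))

theorem step_update (q : Q) (d : Fin b) (w : K → ℤ) :
    M.step (q, Function.update w (M.register q) (w (M.register q) * b + d)) =
      (M.next q d, Function.update w (M.register q)
        (w (M.register q) * M.slope q d + M.offset q d)) := by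
  have digits : Int.divModEquiv b (w (M.register q) * b + d) = (w (M.register q), d) :=
    (Int.divModEquiv b).apply_symm_apply (w (M.register q), d)
  simp only [step, Function.update_self, digits, Function.update_idem]

variable [DecidableEq Q]

theorem exists_vec_eq_ruleSource_one (qd : Q × Fin b) (w : K → ℤ) :
    ∃ c, M.ruleSource qd (1, w) = vec c ∧ M.ruleTarget qd (1, w) = vec (M.step c) :=
  ⟨_, affineSide_one .., by rw [step_update]; exact affineSide_one ..⟩

theorem exists_ruleSource_eq_vec (c : Q × (K → ℤ)) :
    ∃ qd p, M.ruleSource qd p = vec c ∧ M.ruleTarget qd p = vec (M.step c) := by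
  obtain ⟨q, w⟩ := c
  let zd := Int.divModEquiv b (w (M.register q))
  have digits : zd.1 * b + zd.2 = w (M.register q) := (Int.divModEquiv b).symm_apply_apply _
  refine ⟨(q, zd.2), (1, Function.update w (M.register q) zd.1), ?_, ?_⟩
  · rw [ruleSource, affineSide_one, Function.update_self, Function.update_idem, digits,
      Function.update_eq_self]
  · rw [ruleTarget, affineSide_one, Function.update_self, Function.update_idem]
    rfl

/-- The vectors that are not the vector of a configuration from which `d` cannot be reached. -/
def admissible (d : Q × (K → ℤ)) : Set (Q ⊕ K → ℤ) :=
  {v | ∀ c, v = vec c → IterateReaches M.step c d}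

variable {M}

theorem vec_mem_admissible_iff {c d : Q × (K → ℤ)} :
    vec c ∈ M.admissible d ↔ IterateReaches M.step c d :=
  ⟨fun h => h c rfl, fun h _ hc => vec_injective hc ▸ h⟩

theorem zmultiples_vec_subset_admissible (d : Q × (K → ℤ)) :
    (AddSubgroup.zmultiples (vec d) : Set (Q ⊕ K → ℤ)) ⊆ M.admissible d := by
  rintro _ ⟨s, rfl⟩ c hc
  obtain rfl := eq_one_of_zsmul_vec_eq_vec hc
  exact ⟨0, (vec_injective ((one_zsmul _).symm.trans hc)).symm⟩

theorem ruleSource_mem_admissible_iff {d : Q × (K → ℤ)} (hd : M.step d = d) (qd : Q × Fin b)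
    (p : ℤ × (K → ℤ)) :
    M.ruleSource qd p ∈ M.admissible d ↔ M.ruleTarget qd p ∈ M.admissible d := by
  obtain ⟨s, w⟩ := p
  by_cases hs : s = 1
  · subst hs
    obtain ⟨c, source_eq, target_eq⟩ := M.exists_vec_eq_ruleSource_one qd w
    rw [source_eq, target_eq, vec_mem_admissible_iff, vec_mem_admissible_iff,
      iterateReaches_apply_iff hd]
  · exact iff_of_true (fun c hc => absurd (eq_one_of_affineSide_eq_vec hc) hs)
      (fun c hc => absurd (eq_one_of_affineSide_eq_vec hc) hs)

variable [Fintype Q] [Fintype K] {S : Set (ℤ × (K → ℤ))}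

theorem isConj_latticeHom_vec_step (hS : AddSubgroup.closure S = ⊤) (c : Q × (K → ℤ)) :
    IsConj (latticeHom M.ruleSource M.ruleTarget S (vec c)).toMul
      (latticeHom M.ruleSource M.ruleTarget S (vec (M.step c))).toMul := by
  obtain ⟨qd, p, source_eq, target_eq⟩ := M.exists_ruleSource_eq_vec c
  rw [← source_eq, ← target_eq]
  exact isConj_iff.2 ⟨_, stableLetter_conj_latticeHom _ _ hS qd p⟩

theorem isConj_latticeHom_vec_iff (hS : AddSubgroup.closure S = ⊤) {d : Q × (K → ℤ)}
    (hd : M.step d = d) (c : Q × (K → ℤ)) :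
    IsConj (latticeHom M.ruleSource M.ruleTarget S (vec c)).toMul
      (latticeHom M.ruleSource M.ruleTarget S (vec d)).toMul ↔ IterateReaches M.step c d := by
  constructor
  · intro h
    exact vec_mem_admissible_iff.1 <| mem_of_isConj_latticeHom _ _ M.ruleSource_injective
      M.ruleTarget_injective (ruleSource_mem_admissible_iff hd)
      (zmultiples_vec_subset_admissible d) h.symm
  · rintro ⟨n, rfl⟩
    clear hd
    induction n generalizing c with
    | zero => exact IsConj.refl _
    | succ n ih => exact (isConj_latticeHom_vec_step hS c).trans (ih (M.step c))

end Step

section Restrict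

variable [NeZero b] [DecidableEq K] (M : AffineMachine b Q K)

/-- The submachine on a set of states that is closed under transitions. -/
def restrict (Q' : Set Q) (hQ' : ∀ q ∈ Q', ∀ d, M.next q d ∈ Q') : AffineMachine b Q' K where
  register q := M.register q
  next q d := ⟨M.next q d, hQ' q q.2 d⟩
  slope q d := M.slope q d
  offset q d := M.offset q d
  slope_ne_zero q d := M.slope_ne_zero q d

theorem iterateReaches_restrict_iff (Q' : Set Q) (hQ' : ∀ q ∈ Q', ∀ d, M.next q d ∈ Q')
    (c d : Q' × (K → ℤ)) :
    IterateReaches (M.restrict Q' hQ').step c d ↔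
      IterateReaches M.step (Prod.map Subtype.val id c) (Prod.map Subtype.val id d) :=
  (iterateReaches_iff_of_semiconj (φ := Prod.map Subtype.val id) (fun _ => rfl)
    (Subtype.val_injective.prodMap Function.injective_id) c d).symm

end Restrict

end AffineMachine

section Words

/-- Conjugacy of words in the group presented by `rels` is decidable. -/
def HasSolvableConjugacyProblem {m : ℕ} (rels : Set (FreeGroup (Fin m))) : Prop :=
  ComputablePred fun p : List (Fin m × Bool) × List (Fin m × Bool) =>
    ∃ g : PresentedGroup rels,
      g * PresentedGroup.mk rels (FreeGroup.mk p.1) * g⁻¹ =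
        PresentedGroup.mk rels (FreeGroup.mk p.2)

theorem mk_cons_replicate {X : Type*} (x y : X) (N : ℕ) :
    FreeGroup.mk ((x, true) :: List.replicate N (y, true)) =
      FreeGroup.of x * FreeGroup.of y ^ N := by
  rw [FreeGroup.of, FreeGroup.of, FreeGroup.pow_mk, FreeGroup.mul_mk,
    List.flatten_replicate_singleton]
  rfl

theorem primrec_cons_replicate {X : Type*} [Primcodable X] (x y : X) :
    Primrec fun N => x :: List.replicate N y := by
  have replicate_eq (N : ℕ) : List.replicate N y = (List.range N).map fun _ => y := by
    rw [List.map_const', List.length_range]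
  simp only [replicate_eq]
  exact Primrec.list_cons.comp (.const x) (Primrec.list_map Primrec.list_range (.const y))

theorem isConj_mulEquiv_iff {G H : Type*} [Group G] [Group H] (E : G ≃* H) {a b : G} :
    IsConj (E a) (E b) ↔ IsConj a b :=
  ⟨fun h => by simpa using E.symm.toMonoidHom.map_isConj h, E.toMonoidHom.map_isConj⟩

theorem exists_unsolvable_conjugacy_problem_of_isConj_of_mul_pow {X : Type*} [Finite X]
    {rels : Set (FreeGroup X)} (hrels : rels.Finite) (x y : X) (z : FreeGroup X)
    (undecidable : ¬ ComputablePred fun N : ℕ =>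
      IsConj (PresentedGroup.mk rels (.of x * .of y ^ N)) (PresentedGroup.mk rels z)) :
    ∃ (m : ℕ) (rels : Set (FreeGroup (Fin m))),
      rels.Finite ∧ ¬ HasSolvableConjugacyProblem rels := by
  obtain ⟨m, ⟨e⟩⟩ := Finite.exists_equiv_fin X
  refine ⟨m, FreeGroup.freeGroupCongr e '' rels, hrels.image _, fun decidable => undecidable ?_⟩
  let E := PresentedGroup.equivPresentedGroup rels e
  let words (N : ℕ) := ((e x, true) :: List.replicate N (e y, true),
    (FreeGroup.freeGroupCongr e z).toWord)
  have words_computable : Computable words :=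
    ((primrec_cons_replicate _ _).pair (.const _)).to_comp
  refine ComputablePred.computable_of_manyOneReducible ⟨words, words_computable, fun N => ?_⟩
    decidable
  rw [← isConj_iff, mk_cons_replicate, FreeGroup.mk_toWord]
  have source_eq : FreeGroup.of (e x) * FreeGroup.of (e y) ^ N =
      FreeGroup.freeGroupCongr e (.of x * .of y ^ N) := by
    simp only [map_mul, map_pow, FreeGroup.freeGroupCongr_apply, FreeGroup.map.of]
  rw [source_eq]
  exact (isConj_mulEquiv_iff E).symm

end Words

namespace AffineMachine

variable {b : ℕ} {Q K : Type*} [DecidableEq K]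

theorem mk_of_mul_of_pow_eq_latticeHom {J P : Type*} [AddCommGroup P] [DecidableEq Q] [Fintype Q]
    [Fintype K] (α β : J → P →+ (Q ⊕ K → ℤ)) (S : Set P) (q : Q) (k : K) (N : ℕ) :
    PresentedGroup.mk (hnnRels α β S)
        (.of (Sum.inl (Sum.inl q)) * .of (Sum.inl (Sum.inr k)) ^ N) =
      (latticeHom α β S (vec (q, Pi.single k (N : ℤ)))).toMul := by
  have vec_eq : vec (q, Pi.single k (N : ℤ)) =
      Pi.single (Sum.inl q) 1 + N • Pi.single (Sum.inr k) 1 := by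
    rw [vec, ← Pi.single_smul, nsmul_one]
    ext (i | i) <;> simp [Pi.single_apply]
  rw [vec_eq, map_add, toMul_add, map_nsmul, toMul_nsmul, latticeHom_single, latticeHom_single,
    map_mul, map_pow]
  rfl

theorem exists_unsolvable_conjugacy_problem [NeZero b] [Finite Q] [Finite K]
    (M : AffineMachine b Q K) (q : Q) (k : K) {d : Q × (K → ℤ)} (hd : M.step d = d)
    (undecidable : ¬ ComputablePred fun N : ℕ =>
      IterateReaches M.step (q, Pi.single k (N : ℤ)) d) :
    ∃ (m : ℕ) (rels : Set (FreeGroup (Fin m))),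
      rels.Finite ∧ ¬ HasSolvableConjugacyProblem rels := by
  classical
  cases nonempty_fintype Q
  cases nonempty_fintype K
  obtain ⟨S, hS⟩ := AddGroup.fg_def.1 (Module.Finite.iff_addGroup_fg.1
    (inferInstance : Module.Finite ℤ (ℤ × (K → ℤ))))
  refine exists_unsolvable_conjugacy_problem_of_isConj_of_mul_pow
    (finite_hnnRels M.ruleSource M.ruleTarget S.finite_toSet)
    (.inl (.inl q)) (.inl (.inr k)) (vecWord (vec d)) ?_
  simpa only [mk_of_mul_of_pow_eq_latticeHom, mk_vecWord, isConj_latticeHom_vec_iff hS hd]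
    using undecidable

end AffineMachine

section StackCode

variable {Γ : Type*} [Fintype Γ]

variable (Γ) in
/-- Stack symbols as nonzero digits; the digit `0` marks the bottom of a stack. -/
noncomputable def digitEquiv : Option Γ ≃ Fin (Fintype.card Γ + 1) :=
  (Fintype.equivFin Γ).optionCongr.trans (finSuccEquiv _).symm

/-- A stack as a natural number, with the digit of the top symbol in the last place. -/
noncomputable def stackCode (l : List Γ) : ℕ :=
  l.foldr (fun a n => n * (Fintype.card Γ + 1) + digitEquiv Γ (some a)) 0

theorem stackCode_tail_add_digit (l : List Γ) :
    stackCode l.tail * (Fintype.card Γ + 1) + digitEquiv Γ l.head? = stackCode l := by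
  cases l with
  | nil => simp [stackCode, digitEquiv]
  | cons a l => rfl

theorem divModEquiv_stackCode (l : List Γ) :
    Int.divModEquiv (Fintype.card Γ + 1) (stackCode l) =
      (↑(stackCode l.tail), digitEquiv Γ l.head?) := by
  rw [← Equiv.eq_symm_apply]
  change (stackCode l : ℤ) =
    stackCode l.tail * (Fintype.card Γ + 1 : ℕ) + (digitEquiv Γ l.head? : ℕ)
  exact_mod_cast (stackCode_tail_add_digit l).symm

theorem stackCode_inj_parts {l l' : List Γ} (h : stackCode l = stackCode l') :
    stackCode l.tail = stackCode l'.tail ∧ l.head? = l'.head? := by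
  have divMod_eq := congrArg (fun n : ℕ => Int.divModEquiv (Fintype.card Γ + 1) n) h
  simpa only [divModEquiv_stackCode, Prod.mk.injEq, Nat.cast_inj,
    (digitEquiv Γ).injective.eq_iff] using divMod_eq

theorem stackCode_injective : Function.Injective (stackCode : List Γ → ℕ) := by
  intro l
  induction l with
  | nil => exact fun l' h => (List.head?_eq_none_iff.1 (stackCode_inj_parts h).2.symm).symm
  | cons a l ih =>
    intro l' h
    obtain ⟨tails_eq, heads_eq⟩ := stackCode_inj_parts h
    exact (List.eq_cons_of_mem_head? (heads_eq ▸ rfl : a ∈ l'.head?)).symm ▸ ih tails_eq ▸ rfl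

end StackCode

section StackMachine

open Turing TM2

/-- The instructions of a stack machine whose stacks `K` share the alphabet `Γ`. -/
abbrev StackStmt (Γ Λ σ K : Type*) : Type _ := Stmt (fun _ : K => Γ) Λ σ

/-- Configurations of a stack machine between two instructions of a block: the remaining
instructions, the internal state and the stacks. -/
abbrev StmtCfg (Γ Λ σ K : Type*) : Type _ := (StackStmt Γ Λ σ K × σ) × (K → List Γ)

variable {Γ Λ σ K : Type*} (M : Λ → StackStmt Γ Λ σ K)

/-- The instruction-level configuration reached when `TM2.step` stops in a given configuration. -/
def stmtCfg (c : Cfg (fun _ : K => Γ) Λ σ) : StmtCfg Γ Λ σ K :=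
  ((c.l.elim .halt M, c.var), c.stk)

/-- The statements occurring in the blocks of `M` at the labels in `L`, and the halting one. -/
noncomputable def stmtSupport (L : Finset Λ) : Set (StackStmt Γ Λ σ K) :=
  insert .halt (⋃ l ∈ L, ↑(stmts₁ (M l)))

theorem finite_stmtSupport (L : Finset Λ) : (stmtSupport M L).Finite :=
  (L.finite_toSet.biUnion fun _ _ => Finset.finite_toSet _).insert _

variable {M} in
theorem apply_mem_stmtSupport {L : Finset Λ} {l : Λ} (hl : l ∈ L) : M l ∈ stmtSupport M L :=
  Set.mem_insert_of_mem _ (Set.mem_biUnion hl stmts₁_self)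

namespace AffineMachine

variable [Fintype Γ] [Inhabited K]

/-- The affine machine that executes single instructions of a stack machine on the codes of its
stacks. Instructions that leave the stacks alone read an arbitrary register, and restore it. -/
noncomputable def ofStackMachine :
    AffineMachine (Fintype.card Γ + 1) (StackStmt Γ Λ σ K × σ) K where
  register
    | (.push k _ _, _) | (.peek k _ _, _) | (.pop k _ _, _) => k
    | _ => default
  next
    | (.push _ _ q, v), _ => (q, v)
    | (.peek _ f q, v), d | (.pop _ f q, v), d => (q, f v ((digitEquiv Γ).symm d))
    | (.load a q, v), _ => (q, a v)
    | (.branch p q₁ q₂, v), _ => (cond (p v) q₁ q₂, v)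
    | (.goto l, v), _ => (M (l v), v)
    | (.halt, v), _ => (.halt, v)
  slope
    | (.push _ _ _, _), _ => (Fintype.card Γ + 1) ^ 2
    | (.pop _ _ _, _), _ => 1
    | _, _ => Fintype.card Γ + 1
  offset
    | (.push _ f _, v), d => d * (Fintype.card Γ + 1) + digitEquiv Γ (some (f v))
    | (.pop _ _ _, _), _ => 0
    | _, d => d
  slope_ne_zero q d := by
    split <;> positivity

theorem next_mem_stmtSupport {L : Finset Λ}
    (hL : ∀ l ∈ L, SupportsStmt L (M l)) {q : StackStmt Γ Λ σ K × σ}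
    (hq : q.1 ∈ stmtSupport M L) (d : Fin (Fintype.card Γ + 1)) :
    ((ofStackMachine M).next q d).1 ∈ stmtSupport M L := by
  obtain ⟨q, v⟩ := q
  obtain rfl | hq := hq
  · exact Set.mem_insert _ _
  obtain ⟨l, hl, hq⟩ := Set.mem_iUnion₂.1 hq
  have mem_of_mem_stmts₁ {q'} (hq' : q' ∈ stmts₁ q) : q' ∈ stmtSupport M L :=
    Set.mem_insert_of_mem _ (Set.mem_biUnion hl (stmts₁_trans hq hq'))
  cases q with
  | halt => exact Set.mem_insert _ _
  | goto j => exact apply_mem_stmtSupport (stmts₁_supportsStmt_mono hq (hL l hl) v)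
  | branch p q₁ q₂ =>
    refine mem_of_mem_stmts₁ ?_
    simp only [ofStackMachine]
    cases p v <;> simp [stmts₁, stmts₁_self]
  | _ => exact mem_of_mem_stmts₁ (by simp [ofStackMachine, stmts₁, stmts₁_self])

end AffineMachine

variable [DecidableEq K]

/-- The configuration at the end of the current block of instructions. -/
def runBlock (c : StmtCfg Γ Λ σ K) : Cfg (fun _ : K => Γ) Λ σ :=
  stepAux c.1.1 c.1.2 c.2

/-- Executes a single instruction of a stack machine with program `M`, where `TM2.step` runs a whole
block up to the next jump. Halted configurations are fixed. -/
def stmtStep : StmtCfg Γ Λ σ K → StmtCfg Γ Λ σ K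
  | ((.push k f q, v), S) => ((q, v), Function.update S k (f v :: S k))
  | ((.peek k f q, v), S) => ((q, f v (S k).head?), S)
  | ((.pop k f q, v), S) => ((q, f v (S k).head?), Function.update S k (S k).tail)
  | ((.load a q, v), S) => ((q, a v), S)
  | ((.branch p q₁ q₂, v), S) => ((cond (p v) q₁ q₂, v), S)
  | ((.goto l, v), S) => ((M (l v), v), S)
  | ((.halt, v), S) => ((.halt, v), S)

theorem reaches_runBlock_stmtStep (c : StmtCfg Γ Λ σ K) :
    StateTransition.Reaches (TM2.step M) (runBlock c) (runBlock (stmtStep M c)) := by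
  obtain ⟨⟨q, v⟩, S⟩ := c
  cases q with
  | goto l => exact .single rfl
  | branch p q₁ q₂ =>
    simp only [runBlock, stmtStep, stepAux]
    cases p v <;> exact .refl
  | _ => exact .refl

theorem reaches_runBlock_iterate (n : ℕ) (c : StmtCfg Γ Λ σ K) :
    StateTransition.Reaches (TM2.step M) (runBlock c) (runBlock ((stmtStep M)^[n] c)) := by
  induction n generalizing c with
  | zero => exact .refl
  | succ n ih => exact (reaches_runBlock_stmtStep M c).trans (ih _)

theorem iterateReaches_runBlock (c : StmtCfg Γ Λ σ K) :
    IterateReaches (stmtStep M) c (stmtCfg M (runBlock c)) := by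
  obtain ⟨⟨q, v⟩, S⟩ := c
  induction q generalizing v S with
  | halt => exact ⟨0, rfl⟩
  | goto l => exact ⟨1, rfl⟩
  | branch p q₁ q₂ ih₁ ih₂ =>
    refine .of_apply ?_
    simp only [runBlock, stmtStep, stepAux]
    cases p v
    · exact ih₂ _ _
    · exact ih₁ _ _
  | push _ _ _ ih | peek _ _ _ ih | pop _ _ _ ih | load _ _ ih => exact .of_apply (ih _ _)

theorem iterateReaches_stmtCfg {c c' : Cfg (fun _ : K => Γ) Λ σ}
    (h : StateTransition.Reaches (TM2.step M) c c') :
    IterateReaches (stmtStep M) (stmtCfg M c) (stmtCfg M c') := by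
  induction h with
  | refl => exact ⟨0, rfl⟩
  | @tail c₁ c₂ _ h ih =>
    obtain ⟨_ | l, v, S⟩ := c₁
    · cases h
    · obtain rfl := Option.some.inj h
      exact ih.trans (iterateReaches_runBlock M ((M l, v), S))

theorem reaches_runBlock_stmtCfg (c : Cfg (fun _ : K => Γ) Λ σ) :
    StateTransition.Reaches (TM2.step M) c (runBlock (stmtCfg M c)) := by
  obtain ⟨_ | l, v, S⟩ := c
  · exact .refl
  · exact .single rfl

theorem iterateReaches_stmtCfg_halt_iff (c : Cfg (fun _ : K => Γ) Λ σ) (v : σ) (S : K → List Γ) :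
    IterateReaches (stmtStep M) (stmtCfg M c) ((.halt, v), S) ↔
      StateTransition.Reaches (TM2.step M) c ⟨none, v, S⟩ := by
  constructor
  · rintro ⟨n, hn⟩
    have reaches := reaches_runBlock_iterate M n (stmtCfg M c)
    rw [hn] at reaches
    exact (reaches_runBlock_stmtCfg M c).trans reaches
  · exact iterateReaches_stmtCfg M

theorem AffineMachine.semiconj_ofStackMachine [Fintype Γ] [Inhabited K] :
    Function.Semiconj (Prod.map id fun S k => (stackCode (S k) : ℤ)) (stmtStep M)
      (AffineMachine.ofStackMachine M).step := by
  rintro ⟨⟨q, v⟩, S⟩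
  have encode_update (k : K) (l : List Γ) :
      (fun k' => (stackCode (Function.update S k l k') : ℤ)) =
        Function.update (fun k' => (stackCode (S k') : ℤ)) k (stackCode l) :=
    funext fun k' => Function.apply_update (fun _ l => (stackCode l : ℤ)) S k l k'
  have tail_add_digit (k : K) :
      (stackCode (S k).tail : ℤ) * (Fintype.card Γ + 1) + digitEquiv Γ (S k).head? =
        stackCode (S k) := mod_cast stackCode_tail_add_digit (S k)
  have keep (k : K) := Function.update_eq_self k fun k' => (stackCode (S k') : ℤ)
  cases q <;>
    simp only [AffineMachine.step, ofStackMachine, stmtStep, Prod.map_apply, id_eq,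
      divModEquiv_stackCode, Equiv.symm_apply_apply, encode_update, tail_add_digit, keep,
      mul_one, add_zero]
  case push k f q =>
    have code_cons : (stackCode (f v :: S k) : ℤ) =
        stackCode (S k) * (Fintype.card Γ + 1) + digitEquiv Γ (some (f v)) :=
      mod_cast (stackCode_tail_add_digit (f v :: S k)).symm
    rw [code_cons, ← tail_add_digit k]
    ring_nf

theorem AffineMachine.iterateReaches_ofStackMachine_iff [Fintype Γ] [Inhabited K]
    (c : Cfg (fun _ : K => Γ) Λ σ) (v : σ) (S : K → List Γ) :
    IterateReaches (ofStackMachine M).step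
        ((c.l.elim .halt M, c.var), fun k => (stackCode (c.stk k) : ℤ))
        ((.halt, v), fun k => (stackCode (S k) : ℤ)) ↔
      StateTransition.Reaches (TM2.step M) c ⟨none, v, S⟩ := by
  have encode_injective : Function.Injective
      (Prod.map id fun S k => (stackCode (S k) : ℤ) : StmtCfg Γ Λ σ K → _) :=
    Function.injective_id.prodMap fun S S' h =>
      funext fun k => stackCode_injective (Nat.cast_injective (congrFun h k))
  rw [← iterateReaches_stmtCfg_halt_iff,
    ← iterateReaches_iff_of_semiconj (semiconj_ofStackMachine M) encode_injective]
  rfl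

theorem exists_unsolvable_conjugacy_problem_of_stackMachine [Fintype Γ] [Finite σ] [Finite K]
    {L : Finset Λ} (hL : ∀ l ∈ L, SupportsStmt L (M l)) {l : Λ} (hl : l ∈ L) (v v' : σ) (k : K)
    {input : ℕ → List Γ} (hinput : Primrec fun n => stackCode (input n)) (S' : K → List Γ)
    (undecidable : ¬ ComputablePred fun n => StateTransition.Reaches (TM2.step M)
      ⟨some l, v, Function.update (fun _ => []) k (input n)⟩ ⟨none, v', S'⟩) :
    ∃ (m : ℕ) (rels : Set (FreeGroup (Fin m))),
      rels.Finite ∧ ¬ HasSolvableConjugacyProblem rels := by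
  have : Inhabited K := ⟨k⟩
  let machine := AffineMachine.ofStackMachine M
  let states : Set (StackStmt Γ Λ σ K × σ) := Prod.fst ⁻¹' stmtSupport M L
  have states_closed : ∀ q ∈ states, ∀ d, machine.next q d ∈ states :=
    fun q hq => AffineMachine.next_mem_stmtSupport M hL hq
  have : Finite states := ((finite_stmtSupport M L).prod (Set.finite_univ (α := σ))).subset
    fun q hq => ⟨hq, trivial⟩
  have code_input (n : ℕ) :
      (fun k' => (stackCode (Function.update (fun _ => []) k (input n) k') : ℤ)) =
        Pi.single k (stackCode (input n) : ℤ) :=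
    funext fun k' =>
      Function.apply_update (fun _ l => (stackCode l : ℤ)) (fun _ => []) k (input n) k'
  refine (machine.restrict states states_closed).exists_unsolvable_conjugacy_problem
    ⟨(M l, v), apply_mem_stmtSupport hl⟩ k
    (d := (⟨(.halt, v'), Set.mem_insert _ _⟩, fun k => (stackCode (S' k) : ℤ))) ?_ ?_
  · exact Subtype.val_injective.prodMap Function.injective_id
      (AffineMachine.semiconj_ofStackMachine M ((.halt, v'), S')).symm
  · refine fun computable => undecidable
      (ComputablePred.computable_of_manyOneReducible ⟨_, hinput.to_comp, fun n => ?_⟩ computable)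
    rw [AffineMachine.iterateReaches_restrict_iff, ← code_input]
    exact (AffineMachine.iterateReaches_ofStackMachine_iff M _ v' S').symm

end StackMachine

section HaltingProblem

open Turing PartrecToTM2

theorem trNat_bit (b : Bool) (n : ℕ) (h : Nat.bit b n ≠ 0) :
    trNat (Nat.bit b n) = cond b Γ'.bit1 Γ'.bit0 :: trNat n := by
  have cast_bit : (Nat.bit b n : Num) = cond b Num.bit1 Num.bit0 (n : Num) := by
    rw [← Num.ofNat'_eq, Num.ofNat'_bit, Num.ofNat'_eq]
  have cast_ne_zero : (Nat.bit b n : Num) ≠ 0 := mod_cast h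
  rw [cast_bit] at cast_ne_zero
  rw [trNat, trNat, cast_bit]
  generalize (n : Num) = m at cast_ne_zero
  cases b <;> cases m
  · exact absurd rfl cast_ne_zero
  all_goals rfl

theorem primrec_of_bit {α : Type*} [Primcodable α] {f : ℕ → α} {g : Bool → α → α}
    (hg : Primrec₂ g) (hf : ∀ b n, Nat.bit b n ≠ 0 → f (Nat.bit b n) = g b (f n)) :
    Primrec f := by
  have step_primrec : Primrec fun l : List α =>
      if l.length = 0 then some (f 0) else
        l[l.length.div2]?.map (g l.length.bodd) := by
    have hlength : Primrec (List.length : List α → ℕ) := Primrec.list_length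
    exact .ite (Primrec.eq.comp hlength (.const 0)) (.const _)
      (Primrec.option_map (Primrec.list_getElem?.comp .id (Primrec.nat_div2.comp hlength))
        (hg.comp (Primrec.nat_bodd.comp (hlength.comp .fst)) .snd))
  have strong_rec : Primrec₂ fun (_ : Unit) n => f n := by
    refine Primrec.nat_strong_rec _ (step_primrec.comp Primrec.snd).to₂ fun _ n => ?_
    obtain rfl | hn := eq_or_ne n 0
    · rfl
    have f_eq := hf n.bodd n.div2
    rw [Nat.bit_bodd_div2] at f_eq
    have div2_lt : n.div2 < n := by grind
    simp [hn, div2_lt, f_eq hn]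
  exact strong_rec.comp (Primrec.const ()) Primrec.id

theorem primrec_stackCode_trList : Primrec fun n => stackCode (trList [n]) := by
  refine primrec_of_bit (g := fun b code => code * (Fintype.card Γ' + 1) +
    digitEquiv Γ' (some (cond b Γ'.bit1 Γ'.bit0))) ?_ fun b n h => ?_
  · exact Primrec.nat_add.comp (Primrec.nat_mul.comp .snd (.const _))
      ((Primrec.dom_finite fun b => (digitEquiv Γ' (some (cond b Γ'.bit1 Γ'.bit0)) : ℕ)).comp .fst)
  · simp only [trList, trNat_bit b n h]
    rfl

theorem exists_code_not_computablePred_reaches_halt : ∃ c : ToPartrec.Code,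
    ¬ ComputablePred fun n => StateTransition.Reaches (TM2.step tr) (init c [n]) (halt [0]) := by
  let U : ℕ →. ℕ := fun n => ((Denumerable.ofNat Nat.Partrec.Code n).eval 0).map fun _ => 0
  have hU : Partrec U :=
    .map (Nat.Partrec.Code.eval_part.comp (.ofNat _) (.const 0)) (Computable.const 0).to₂
  obtain ⟨c, hc⟩ := ToPartrec.Code.exists_code (Nat.Partrec'.part_iff₁.2 hU)
  have eval_init (n : ℕ) :
      StateTransition.eval (TM2.step tr) (init c [n]) = halt <$> pure <$> U n :=
    (tr_eval c [n]).trans (congrArg _ (hc ⟨[n], rfl⟩))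
  have reaches_halt_iff (n : ℕ) :
      StateTransition.Reaches (TM2.step tr) (init c [n]) (halt [0]) ↔ (U n).Dom := calc
    _ ↔ halt [0] ∈ StateTransition.eval (TM2.step tr) (init c [n]) :=
      (StateTransition.mem_eval.trans (and_iff_left rfl)).symm
    _ ↔ (U n).Dom := by
      rw [eval_init]
      exact ⟨fun h => h.fst, fun h => ⟨h, rfl⟩⟩
  refine ⟨c, fun computable => ComputablePred.halting_problem 0
    (ComputablePred.computable_of_manyOneReducible
      ⟨Encodable.encode, Computable.encode, fun code => ?_⟩ computable)⟩
  rw [reaches_halt_iff]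
  change _ ↔ ((Denumerable.ofNat Nat.Partrec.Code (Encodable.encode code)).eval 0).Dom
  rw [Denumerable.ofNat_encode]

theorem elim_eq_update_main (l : List Γ') :
    K'.elim l [] [] [] = Function.update (fun _ => []) K'.main l := by
  ext1 k
  cases k <;> rfl

instance finite_stackIndex : Finite K' :=
  Set.finite_univ_iff.1 <| (Set.toFinite {K'.main, K'.rev, K'.aux, K'.stack}).subset
    fun k _ => by cases k <;> simp

end HaltingProblem

/-- **Novikov (1954):** there exists a finitely presented group with unsolvable
conjugacy problem. -/
theorem exists_finitely_presented_group_with_unsolvable_conjugacy_problem :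
    ∃ (m : ℕ) (rels : Set (FreeGroup (Fin m))), rels.Finite ∧
      ¬ ComputablePred fun p : List (Fin m × Bool) × List (Fin m × Bool) =>
          ∃ g : PresentedGroup rels,
            g * PresentedGroup.mk rels (FreeGroup.mk p.1) * g⁻¹ =
              PresentedGroup.mk rels (FreeGroup.mk p.2) := by
  open Turing.PartrecToTM2 in
  obtain ⟨c, undecidable⟩ := exists_code_not_computablePred_reaches_halt
  have start_mem : trNormal c Cont'.halt ∈ codeSupp c Cont'.halt :=
    codeSupp_self _ _ (trStmts₁_self _)
  simp only [init, elim_eq_update_main] at undecidable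
  exact exists_unsolvable_conjugacy_problem_of_stackMachine tr
    (codeSupp_supports (Finset.Subset.refl _)) start_mem none none K'.main
    primrec_stackCode_trList _ undecidable
end

section
/- (Post 1947, Markov 1947) There exists a finitely presented monoid with unsolvable word problem: there exist a natural number m and a finite set R of pairs of elements of the free monoid on Fin m such that, letting c be the monoid congruence on FreeMonoid (Fin m) generated by R (i.e. conGen of the relation determined by R), the predicate on pairs (u, v) of lists in List (Fin m) given by 'the words u and v are related by c, i.e. their images in the quotient monoid FreeMonoid (Fin m) ⧸ c coincide' is not a computable predicate (¬ ComputablePred). -/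
/-!
The word problem of a suitable monoid encodes the halting problem. Turn a Turing machine `M` into a
monoid whose generators are the tape symbols, the states, two end markers and a letter `zero`. A
configuration becomes a word, with the state written just before the scanned symbol; the relations
let the ends grow blanks, perform the instructions of `M`, send a halting configuration to `zero`,
and make `zero` absorbing. A configuration from which `M` halts thus equals `zero`. For the
converse, let words act on the states of a right-to-left reader that recognises configurations and
ends up knowing whether the configuration runs forever. A step of `M` does not change the final
answer, so the monoid acts, and a configuration that never halts acts differently from `zero`.
-/

open Turing

/-- The word problem of the monoid with generators `α` and relations `R`, as a predicate on pairs
of words. -/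
def WordProblem {α : Type*} (R : Set (FreeMonoid α × FreeMonoid α)) (p : List α × List α) : Prop :=
  conGen (fun x y => (x, y) ∈ R) (FreeMonoid.ofList p.1) (FreeMonoid.ofList p.2)

theorem wordProblem_image_map_equiv {α β : Type*} (e : α ≃ β)
    (R : Set (FreeMonoid α × FreeMonoid α)) (u v : List α) :
    WordProblem (Prod.map (FreeMonoid.map e) (FreeMonoid.map e) '' R) (u.map e, v.map e) ↔
      WordProblem R (u, v) := by
  have hinj : Function.Injective (Prod.map (FreeMonoid.map e) (FreeMonoid.map e)) :=
    (FreeMonoid.freeMonoidCongr e).injective.prodMap (FreeMonoid.freeMonoidCongr e).injective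
  have hcomap := Con.comap_conGen_equiv (FreeMonoid.freeMonoidCongr e)
    fun x y => (x, y) ∈ Prod.map (FreeMonoid.map e) (FreeMonoid.map e) '' R
  have hrel (x y : FreeMonoid α) :
      (FreeMonoid.map e x, FreeMonoid.map e y) ∈
        Prod.map (FreeMonoid.map e) (FreeMonoid.map e) '' R ↔ (x, y) ∈ R :=
    hinj.mem_set_image (a := (x, y))
  have hconGen : conGen (fun x y => (FreeMonoid.freeMonoidCongr e x, FreeMonoid.freeMonoidCongr e y)
      ∈ Prod.map (FreeMonoid.map e) (FreeMonoid.map e) '' R) = conGen fun x y => (x, y) ∈ R :=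
    congrArg conGen (funext₂ fun x y => propext (hrel x y))
  exact iff_of_eq (congrArg (· (FreeMonoid.ofList u) (FreeMonoid.ofList v)) (hcomap.trans hconGen))

theorem listBlank_induction_cons {Γ : Type*} [Inhabited Γ] {P : ListBlank Γ → Prop}
    (nil : P (ListBlank.mk [])) (cons : ∀ a l, P l → P (l.cons a)) (l : ListBlank Γ) : P l := by
  refine l.induction_on fun l => ?_
  induction l with
  | nil => exact nil
  | cons a l ih => simpa only [ListBlank.cons_mk] using cons a _ ih

section ListBlankFoldr

variable {Γ β : Type*} [Inhabited Γ] (f : Γ → β → β) {b : β} (hb : f default b = b)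

/-- Right fold over a half-infinite tape, with the value `b` on the blank tape. -/
def listBlankFoldr (l : ListBlank Γ) : β :=
  l.liftOn (List.foldr f b) <| by
    rintro l _ ⟨n, rfl⟩
    have hblank : (List.replicate n default).foldr f b = b := by
      induction n with
      | zero => rfl
      | succ n ih => rw [List.replicate_succ, List.foldr_cons, ih, hb]
    rw [List.foldr_append, hblank]

theorem listBlankFoldr_cons (a : Γ) (l : ListBlank Γ) :
    listBlankFoldr f hb (l.cons a) = f a (listBlankFoldr f hb l) :=
  l.induction_on fun _ => rfl

end ListBlankFoldr

section Halting

variable {Γ Λ : Type*} [Inhabited Γ] [Inhabited Λ] {M : TM0.Machine Γ Λ}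

/-- The machine `M` halts when started in the configuration `c`. -/
def Halts (M : TM0.Machine Γ Λ) (c : TM0.Cfg Γ Λ) : Prop :=
  (StateTransition.eval (TM0.step M) c).Dom

theorem halts_init_iff {l : List Γ} : Halts M (TM0.init l) ↔ (TM0.eval M l).Dom := Iff.rfl

theorem halts_of_step_eq_none {c : TM0.Cfg Γ Λ} (h : TM0.step M c = none) : Halts M c :=
  Part.dom_iff_mem.2 ⟨c, StateTransition.mem_eval.2 ⟨.refl, h⟩⟩

theorem halts_congr_of_step {c c' : TM0.Cfg Γ Λ} (h : TM0.step M c = some c') :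
    Halts M c ↔ Halts M c' :=
  iff_of_eq (congrArg Part.Dom (StateTransition.reaches_eval (Relation.ReflTransGen.single h)))

end Halting

/-- The generators of the monoid attached to a Turing machine with tape alphabet `Γ` and states
`Q`. -/
inductive TapeLetter (Γ Q : Type*)
  | symbol (a : Γ)
  | state (q : Q)
  | leftEnd
  | rightEnd
  | zero

instance {Γ Q : Type*} [Finite Γ] [Finite Q] : Finite (TapeLetter Γ Q) := by
  let f : Γ ⊕ Q ⊕ Fin 3 → TapeLetter Γ Q :=
    Sum.elim .symbol (Sum.elim .state ![.leftEnd, .rightEnd, .zero])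
  refine Finite.of_surjective f ?_
  rintro (a | q | _ | _ | _)
  exacts [⟨.inl a, rfl⟩, ⟨.inr (.inl q), rfl⟩, ⟨.inr (.inr 0), rfl⟩, ⟨.inr (.inr 1), rfl⟩,
    ⟨.inr (.inr 2), rfl⟩]

/-- The word describing the configuration in state `q` with the head on the first letter of the
tape content `l`. -/
def startWord {Γ Q : Type*} (q : Q) (l : List Γ) : List (TapeLetter Γ Q) :=
  .leftEnd :: .state q :: (l.map .symbol ++ [.rightEnd])

section PostRelation

variable {Γ Λ : Type*} [Inhabited Γ] [Inhabited Λ] (M : TM0.Machine Γ Λ) (S : Set Λ)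

open FreeMonoid (of) in
/-- Post's relations for the machine `M` with its states restricted to `S`. -/
inductive PostRelation : FreeMonoid (TapeLetter Γ S) → FreeMonoid (TapeLetter Γ S) → Prop
  | leftEnd_blank : PostRelation (of .leftEnd * of (.symbol default)) (of .leftEnd)
  | blank_rightEnd : PostRelation (of (.symbol default) * of .rightEnd) (of .rightEnd)
  | zero_mul x : PostRelation (of .zero * of x) (of .zero)
  | mul_zero x : PostRelation (of x * of .zero) (of .zero)
  | halt {q : S} {a : Γ} : M q a = none →
      PostRelation (of (.state q) * of (.symbol a)) (of .zero)
  | write {q q' : S} {a b : Γ} : M q a = some (q'.1, .write b) →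
      PostRelation (of (.state q) * of (.symbol a)) (of (.state q') * of (.symbol b))
  | move_right {q q' : S} {a : Γ} : M q a = some (q'.1, .move .right) →
      PostRelation (of (.state q) * of (.symbol a)) (of (.symbol a) * of (.state q'))
  | move_left {q q' : S} {a : Γ} (b : Γ) : M q a = some (q'.1, .move .left) →
      PostRelation (of (.symbol b) * of (.state q) * of (.symbol a))
        (of (.state q') * of (.symbol b) * of (.symbol a))

variable {M S} in
theorem PostRelation.length_le_three {x y : FreeMonoid (TapeLetter Γ S)}
    (h : PostRelation M S x y) : x.length ≤ 3 ∧ y.length ≤ 3 := by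
  induction h <;> simp only [FreeMonoid.length_mul, FreeMonoid.length_of] <;> decide

theorem finite_postRelation [Finite Γ] [Finite S] :
    {p : FreeMonoid (TapeLetter Γ S) × FreeMonoid (TapeLetter Γ S) |
      PostRelation M S p.1 p.2}.Finite := by
  have hshort : {w : FreeMonoid (TapeLetter Γ S) | w.length ≤ 3}.Finite :=
    List.finite_length_le (TapeLetter Γ S) 3
  exact (hshort.prod hshort).subset fun _ => PostRelation.length_le_three

/-- The monoid presented by Post's relations. -/
abbrev PostMonoid : Type _ := PresentedMonoid (PostRelation M S)

end PostRelation

namespace PostMonoid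

variable {Γ Λ : Type*} [Inhabited Γ] [Inhabited Λ] {M : TM0.Machine Γ Λ} {S : Set Λ}

section Configurations

variable (M S) in
/-- The image of a letter in the monoid. -/
abbrev letter (x : TapeLetter Γ S) : PostMonoid M S := PresentedMonoid.of (PostRelation M S) x

theorem letter_zero_mul (x : PostMonoid M S) : letter M S .zero * x = letter M S .zero := by
  induction x using PresentedMonoid.inductionOn with | _ w
  induction w with
  | one => exact mul_one _
  | of x => exact PresentedMonoid.mk_eq_mk_of_rel (.zero_mul x)
  | mul x y hx hy => rw [map_mul, ← mul_assoc, hx, hy]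

theorem mul_letter_zero (x : PostMonoid M S) : x * letter M S .zero = letter M S .zero := by
  induction x using PresentedMonoid.inductionOn with | _ w
  induction w with
  | one => exact one_mul _
  | of x => exact PresentedMonoid.mk_eq_mk_of_rel (.mul_zero x)
  | mul x y hx hy => rw [map_mul, mul_assoc, hy, hx]

variable (M S) in
/-- The element of the monoid spelled by the part of a tape to the left of the head. The symbols of
`l`, listed starting from the head, appear in the word in reverse order. -/
def leftTape (l : ListBlank Γ) : PostMonoid M S :=
  listBlankFoldr (b := letter M S .leftEnd) (fun a x => x * letter M S (.symbol a))
    (PresentedMonoid.mk_eq_mk_of_rel .leftEnd_blank) l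

variable (M S) in
/-- The element of the monoid spelled by the part of a tape from the head on. -/
def rightTape (l : ListBlank Γ) : PostMonoid M S :=
  listBlankFoldr (b := letter M S .rightEnd) (fun a x => letter M S (.symbol a) * x)
    (PresentedMonoid.mk_eq_mk_of_rel .blank_rightEnd) l

theorem leftTape_cons (a : Γ) (l : ListBlank Γ) :
    leftTape M S (l.cons a) = leftTape M S l * letter M S (.symbol a) :=
  listBlankFoldr_cons _ _ a l

theorem rightTape_cons (a : Γ) (l : ListBlank Γ) :
    rightTape M S (l.cons a) = letter M S (.symbol a) * rightTape M S l :=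
  listBlankFoldr_cons _ _ a l

variable (M) in
/-- The element of the monoid spelled by the configuration with state `q` and tape `T`. -/
def config (q : S) (T : Tape Γ) : PostMonoid M S :=
  leftTape M S T.left * letter M S (.state q) * rightTape M S T.right₀

theorem config_eq_zero_of_halted {q : S} {T : Tape Γ} (h : M q T.head = none) :
    config M q T = letter M S .zero := by
  have hrel : letter M S (.state q) * letter M S (.symbol T.head) = letter M S .zero :=
    PresentedMonoid.mk_eq_mk_of_rel (.halt h)
  rw [config, Tape.right₀, rightTape_cons, mul_assoc, ← mul_assoc (letter M S _), hrel,
    letter_zero_mul, mul_letter_zero]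

theorem config_write {q q' : S} {T : Tape Γ} {b : Γ} (h : M q T.head = some (q'.1, .write b)) :
    config M q T = config M q' (T.write b) := by
  have hrel : letter M S (.state q) * letter M S (.symbol T.head) =
      letter M S (.state q') * letter M S (.symbol b) :=
    PresentedMonoid.mk_eq_mk_of_rel (.write h)
  simp only [config, Tape.write, Tape.right₀, rightTape_cons, mul_assoc]
  rw [← mul_assoc (letter M S _), hrel, mul_assoc]

theorem config_move_right {q q' : S} {T : Tape Γ}
    (h : M q T.head = some (q'.1, .move .right)) :
    config M q T = config M q' (T.move .right) := by
  have hrel : letter M S (.state q) * letter M S (.symbol T.head) =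
      letter M S (.symbol T.head) * letter M S (.state q') :=
    PresentedMonoid.mk_eq_mk_of_rel (.move_right h)
  simp only [config, Tape.move, Tape.right₀, ListBlank.cons_head_tail, rightTape_cons,
    leftTape_cons, mul_assoc]
  rw [← mul_assoc (letter M S _), hrel, mul_assoc]

theorem config_move_left {q q' : S} {T : Tape Γ}
    (h : M q T.head = some (q'.1, .move .left)) :
    config M q T = config M q' (T.move .left) := by
  obtain ⟨b, l, hl⟩ := T.left.exists_cons
  have hrel : letter M S (.symbol b) * letter M S (.state q) * letter M S (.symbol T.head) =
      letter M S (.state q') * letter M S (.symbol b) * letter M S (.symbol T.head) :=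
    PresentedMonoid.mk_eq_mk_of_rel (.move_left b h)
  simp only [config, Tape.move, Tape.right₀, hl, ListBlank.head_cons, ListBlank.tail_cons,
    rightTape_cons, leftTape_cons]
  calc leftTape M S l * letter M S (.symbol b) * letter M S (.state q) *
        (letter M S (.symbol T.head) * rightTape M S T.right)
      = leftTape M S l * (letter M S (.symbol b) * letter M S (.state q) *
          letter M S (.symbol T.head)) * rightTape M S T.right := by simp only [mul_assoc]
    _ = _ := by rw [hrel]; simp only [mul_assoc]

theorem config_step {q q' : S} {T T' : Tape Γ} (h : TM0.step M ⟨q, T⟩ = some ⟨q', T'⟩) :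
    config M q T = config M q' T' := by
  obtain ⟨⟨p, s⟩, hM, hcfg⟩ := Option.map_eq_some_iff.1 h
  obtain ⟨rfl, rfl⟩ : p = q' ∧ _ = T' := by simpa only [TM0.Cfg.mk.injEq] using hcfg
  rcases s with (_ | _) | b
  · exact config_move_left hM
  · exact config_move_right hM
  · exact config_write hM

theorem config_eq_zero_of_halts (hS : TM0.Supports M S) {c : TM0.Cfg Γ Λ} (hc : c.q ∈ S)
    (h : Halts M c) : config M ⟨c.q, hc⟩ c.Tape = letter M S .zero := by
  obtain ⟨b, hb⟩ := Part.dom_iff_mem.1 h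
  obtain ⟨hreach, hhalted⟩ := StateTransition.mem_eval.1 hb
  clear h hb
  induction hreach using Relation.ReflTransGen.head_induction_on with
  | refl => exact config_eq_zero_of_halted (Option.map_eq_none_iff.1 hhalted)
  | head hstep _ ih =>
    exact (config_step hstep).trans (ih (TM0.step_supports M hS hstep hc))

theorem mk_symbols_rightEnd (l : List Γ) :
    PresentedMonoid.mk (PostRelation M S) (FreeMonoid.ofList (l.map .symbol ++ [.rightEnd])) =
      rightTape M S (ListBlank.mk l) := by
  induction l with
  | nil => rfl
  | cons a l ih =>
    rw [← ListBlank.cons_mk, rightTape_cons, ← ih]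
    rfl

theorem mk_startWord (q : S) (l : List Γ) :
    PresentedMonoid.mk (PostRelation M S) (FreeMonoid.ofList (startWord q l)) =
      config M q (Tape.mk₁ l) := by
  rw [startWord, FreeMonoid.ofList_cons, FreeMonoid.ofList_cons, map_mul, map_mul,
    mk_symbols_rightEnd, ← mul_assoc, config, Tape.mk₁, Tape.mk₂, Tape.mk'_left, Tape.mk'_right₀]
  rfl

end Configurations

section Action

/-- The states of a reader going through a word from right to left. After the right end marker and
some symbols it knows the tape content `v` from the head on; after the state letter it knows for
which left parts of the tape the configuration runs forever. -/
inductive Reader (Γ : Type*) [Inhabited Γ]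
  | start
  | rightTape (v : ListBlank Γ)
  | diverging (F : Set (ListBlank Γ))

variable (M) in
/-- One step of the reader. At the left end marker the answer is recorded as the set of all tapes
or the empty one. Reading a letter out of place leads to `Reader.diverging ∅`, the same state as
reading a halting configuration. -/
def read : TapeLetter Γ S → Function.End (Reader Γ)
  | .symbol a, .rightTape v => .rightTape (v.cons a)
  | .symbol a, .diverging F => .diverging {l | l.cons a ∈ F}
  | .state q, .rightTape v => .diverging {l | ¬ Halts M ⟨q, Tape.mk' l v⟩}
  | .leftEnd, .diverging F => .diverging {_l | ListBlank.mk [] ∈ F}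
  | .rightEnd, .start => .rightTape (ListBlank.mk [])
  | _, _ => .diverging ∅

theorem diverging_eq_of_step {c c' : ListBlank Γ → TM0.Cfg Γ Λ}
    (h : ∀ l, TM0.step M (c l) = some (c' l)) :
    Reader.diverging {l | ¬ Halts M (c l)} = .diverging {l | ¬ Halts M (c' l)} :=
  congrArg Reader.diverging (Set.ext fun l => not_congr (halts_congr_of_step (h l)))

theorem lift_read_eq_of_postRelation (x y : FreeMonoid (TapeLetter Γ S))
    (h : PostRelation M S x y) : FreeMonoid.lift (read M) x = FreeMonoid.lift (read M) y := by
  have mul_apply (f g : Function.End (Reader Γ)) (r : Reader Γ) : (f * g) r = f (g r) := rfl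
  have blank_nil : ListBlank.cons default (.mk []) = (.mk [] : ListBlank Γ) :=
    (ListBlank.mk []).cons_head_tail
  funext r
  induction h with simp only [map_mul, FreeMonoid.lift_eval_of, mul_apply]
  | leftEnd_blank => cases r <;> simp [read, blank_nil]
  | blank_rightEnd => cases r <;> simp [read, blank_nil]
  | zero_mul x => simp [read]
  | mul_zero x => cases x <;> simp [read]
  | halt h =>
    cases r with
    | rightTape v =>
      refine congrArg Reader.diverging (Set.eq_empty_of_forall_notMem fun l => not_not_intro ?_)
      exact halts_of_step_eq_none (by simp [TM0.step, h])
    | _ => rfl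
  | write h =>
    cases r with
    | rightTape v => exact diverging_eq_of_step fun l => by simp [TM0.step, h]
    | _ => rfl
  | move_right h =>
    cases r with
    | rightTape v => exact diverging_eq_of_step fun l => by simp [TM0.step, h]
    | _ => rfl
  | move_left b h =>
    cases r with
    | rightTape v => exact diverging_eq_of_step fun l => by simp [TM0.step, h]
    | _ => rfl

instance : MulAction (PostMonoid M S) (Reader Γ) :=
  MulAction.compHom _ (PresentedMonoid.lift (read M) lift_read_eq_of_postRelation)

theorem letter_smul (x : TapeLetter Γ S) (r : Reader Γ) : letter M S x • r = read M x r := rfl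

theorem rightTape_smul_start (v : ListBlank Γ) :
    rightTape M S v • (Reader.start : Reader Γ) = .rightTape v := by
  induction v using listBlank_induction_cons with
  | nil => rfl
  | cons a v ih => rw [rightTape_cons, mul_smul, ih, letter_smul, read]

theorem leftTape_smul_diverging (l : ListBlank Γ) (F : Set (ListBlank Γ)) :
    leftTape M S l • Reader.diverging F = .diverging {_l | l ∈ F} := by
  induction l using listBlank_induction_cons generalizing F with
  | nil => rfl
  | cons a l ih => rw [leftTape_cons, mul_smul, letter_smul, read, ih, Set.mem_ofPred_eq]

theorem config_smul_start (q : S) (T : Tape Γ) :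
    config M q T • (Reader.start : Reader Γ) = .diverging {_l | ¬ Halts M ⟨q, T⟩} := by
  rw [config, mul_smul, mul_smul, rightTape_smul_start, letter_smul, read, leftTape_smul_diverging,
    Set.mem_ofPred_eq, Tape.mk'_left_right₀]

theorem config_eq_zero_iff (hS : TM0.Supports M S) {q : S} {T : Tape Γ} :
    config M q T = letter M S .zero ↔ Halts M ⟨q, T⟩ := by
  refine ⟨fun h => ?_, config_eq_zero_of_halts hS q.2⟩
  have hread : Reader.diverging {_l : ListBlank Γ | ¬ Halts M ⟨q, T⟩} = .diverging ∅ := by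
    rw [← config_smul_start, h, letter_smul]
    rfl
  by_contra hT
  simp [hT] at hread

end Action

theorem wordProblem_startWord_iff (hS : TM0.Supports M S) (l : List Γ) :
    WordProblem {p | PostRelation M S p.1 p.2} (startWord ⟨default, hS.1⟩ l, [.zero]) ↔
      (TM0.eval M l).Dom := by
  rw [← halts_init_iff]
  refine Iff.trans ?_ (config_eq_zero_iff hS (q := ⟨default, hS.1⟩))
  rw [← mk_startWord]
  exact PresentedMonoid.mk_eq_mk_iff.symm

end PostMonoid

section InputTape

theorem bits_of_ne_zero {n : ℕ} (hn : n ≠ 0) : n.bits = n.bodd :: n.div2.bits := by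
  conv_lhs => rw [← n.bit_bodd_div2]
  refine Nat.bits_append_bit _ _ fun h => ?_
  rw [← n.bit_bodd_div2, h] at hn
  simpa [Nat.bit, Bool.cond_eq_ite] using hn

theorem primrec_bits : Primrec Nat.bits := by
  refine Primrec.nat_omega_rec' (m := id) (l := fun n => if n = 0 then [] else [n.div2])
    (g := fun n l => some (if n = 0 then [] else n.bodd :: l.headI)) _ Primrec.id ?_ ?_ ?_ ?_
  · exact Primrec.ite (Primrec.eq.comp Primrec.id (Primrec.const 0)) (Primrec.const [])
      (Primrec.list_cons.comp Primrec.nat_div2 (Primrec.const []))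
  · exact Primrec.option_some.comp <|
      Primrec.ite (Primrec.eq.comp Primrec.fst (Primrec.const 0)) (Primrec.const [])
        (Primrec.list_cons.comp (Primrec.nat_bodd.comp Primrec.fst)
          (Primrec.list_headI.comp Primrec.snd))
  · intro n k hk
    by_cases hn : n = 0
    · simp [hn] at hk
    · obtain rfl : k = n.div2 := by simpa [hn] using hk
      exact Nat.binaryRec_decreasing hn
  · intro n
    by_cases hn : n = 0
    · simp [hn]
    · simp [hn, bits_of_ne_zero hn]

open PartrecToTM2 (trPosNum trNat trList)

/-- The symbol for a binary digit in the stack alphabet of the machines `PartrecToTM2.tr`. -/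
def digitSymbol (b : Bool) : PartrecToTM2.Γ' := bif b then .bit1 else .bit0

theorem trPosNum_eq_map_bits (p : PosNum) : trPosNum p = (p : ℕ).bits.map digitSymbol := by
  induction p with
  | one => simp [trPosNum, digitSymbol]
  | bit0 p ih =>
    have hp : (p : ℕ) ≠ 0 := (PosNum.cast_pos p).ne'
    rw [PosNum.cast_bit0, ← two_mul, Nat.bit0_bits _ hp, trPosNum, ih]
    rfl
  | bit1 p ih =>
    rw [PosNum.cast_bit1, ← two_mul, Nat.bit1_bits, trPosNum, ih]
    rfl

theorem trNat_eq_map_bits (n : ℕ) : trNat n = n.bits.map digitSymbol := by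
  conv_rhs => rw [← Num.to_of_nat n]
  rw [trNat]
  cases (n : Num) with
  | zero => simp [PartrecToTM2.trNum]
  | pos p => exact trPosNum_eq_map_bits p

instance : Fintype PartrecToTM2.K' where
  elems := {.main, .rev, .aux, .stack}
  complete k := by cases k <;> decide

/-- The tape alphabet obtained when the four stacks of the machines `PartrecToTM2.tr` are put on
parallel tracks of one tape. -/
abbrev TapeSymbol : Type := TM2to1.Γ' PartrecToTM2.K' fun _ => PartrecToTM2.Γ'

/-- The initial tape content on input `v`: the main stack holds the binary digits of the entries of
`v`. -/
def inputTape (v : List ℕ) : List TapeSymbol := TM2to1.trInit .main (trList v)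

/-- The tape symbol showing only `a`, on the track of the main stack. The flag marks the bottom of
the stacks. -/
def mainTrackSymbol (bottom : Bool) (a : PartrecToTM2.Γ') : TapeSymbol :=
  (bottom, Function.update (fun _ => none) .main (some a))

theorem inputTape_singleton (n : ℕ) :
    inputTape [n] = mainTrackSymbol true .cons ::
      n.bits.reverse.map (mainTrackSymbol false ∘ digitSymbol) := by
  have htrList : (trList [n]).reverse = .cons :: n.bits.reverse.map digitSymbol := by
    simp [trList, trNat_eq_map_bits]
  rw [inputTape, TM2to1.trInit, htrList]
  exact congrArg _ List.map_map

theorem primrec_map_inputTape_singleton {β : Type*} [Primcodable β] (h : TapeSymbol → β) :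
    Primrec fun n => (inputTape [n]).map h := by
  simp only [inputTape_singleton, List.map_cons, List.map_map]
  exact Primrec.list_cons.comp (Primrec.const _) <|
    Primrec.list_map (Primrec.list_reverse.comp primrec_bits)
      ((Primrec.dom_finite _).comp Primrec.snd)

end InputTape

theorem exists_machine_of_code (c : ToPartrec.Code) :
    ∃ (Λ : Type) (_ : Inhabited Λ) (M : TM0.Machine TapeSymbol Λ) (S : Finset Λ),
      TM0.Supports M ↑S ∧ ∀ v, (TM0.eval M (inputTape v)).Dom ↔ (c.eval v).Dom := by
  let _ : Inhabited PartrecToTM2.Λ' := ⟨PartrecToTM2.trNormal c .halt⟩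
  have hinit (v : List ℕ) : TM2.init .main (PartrecToTM2.trList v) = PartrecToTM2.init c v :=
    congrArg (TM2.Cfg.mk _ _) (funext fun k => by cases k <;> rfl)
  let M₂ : PartrecToTM2.Λ' → TM2.Stmt (fun _ : PartrecToTM2.K' => PartrecToTM2.Γ')
      PartrecToTM2.Λ' (Option PartrecToTM2.Γ') := PartrecToTM2.tr
  have hS₂ : TM2.Supports M₂ (PartrecToTM2.codeSupp c .halt) := PartrecToTM2.tr_supports c .halt
  refine ⟨_, inferInstance, TM1to0.tr (TM2to1.tr M₂), _,
    TM1to0.tr_supports _ (TM2to1.tr_supports _ hS₂), fun v => ?_⟩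
  rw [inputTape, TM1to0.tr_eval, TM2to1.tr_eval_dom, TM2.eval, hinit]
  change (StateTransition.eval (TM2.step PartrecToTM2.tr) (PartrecToTM2.init c v)).Dom ↔ _
  rw [PartrecToTM2.tr_eval]
  rfl

theorem exists_machine_of_rePred {α : Type*} [Primcodable α] {p : α → Prop} (hp : REPred p) :
    ∃ (Λ : Type) (_ : Inhabited Λ) (M : TM0.Machine TapeSymbol Λ) (S : Finset Λ),
      TM0.Supports M ↑S ∧ ∀ a, (TM0.eval M (inputTape [Encodable.encode a])).Dom ↔ p a := by
  obtain ⟨c, hc⟩ := ToPartrec.Code.exists_code (Nat.Partrec'.part_iff₁.2 (Partrec.nat_iff.2 hp))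
  obtain ⟨Λ, _, M, S, hS, hM⟩ := exists_machine_of_code c
  refine ⟨Λ, _, M, S, hS, fun a => (hM _).trans ?_⟩
  have hcode := hc (Encodable.encode a ::ᵥ .nil)
  change c.eval [Encodable.encode a] = _ at hcode
  simp [hcode, Part.assert]

theorem exists_manyOneReducible_wordProblem {α : Type*} [Primcodable α] {p : α → Prop}
    (hp : REPred p) :
    ∃ (m : ℕ) (R : Set (FreeMonoid (Fin m) × FreeMonoid (Fin m))),
      R.Finite ∧ p ≤₀ WordProblem R := by
  obtain ⟨Λ, _, M, S, hS, hM⟩ := exists_machine_of_rePred hp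
  obtain ⟨m, ⟨e⟩⟩ := Finite.exists_equiv_fin (TapeLetter TapeSymbol (S : Set Λ))
  refine ⟨m, _,
    (finite_postRelation M (S : Set Λ)).image (Prod.map (FreeMonoid.map e) (FreeMonoid.map e)),
    fun a => ((startWord ⟨default, hS.1⟩ (inputTape [Encodable.encode a])).map e, [e .zero]),
    ?_, fun a => ?_⟩
  · have htape : Primrec fun a : α => (inputTape [Encodable.encode a]).map (e ∘ .symbol) :=
      (primrec_map_inputTape_singleton _).comp Primrec.encode
    simp only [startWord, List.map_cons, List.map_append, List.map_map, List.map_nil]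
    exact (Primrec.pair (Primrec.list_cons.comp (Primrec.const _) (Primrec.list_cons.comp
      (Primrec.const _) (Primrec.list_append.comp htape (Primrec.const _))))
      (Primrec.const _)).to_comp
  · rw [← hM a, ← PostMonoid.wordProblem_startWord_iff hS]
    exact (wordProblem_image_map_equiv e _ _ _).symm

/-- **Post (1947), Markov (1947):** there exists a finitely presented monoid
with unsolvable word problem. -/
theorem exists_finitely_presented_monoid_with_unsolvable_word_problem :
    ∃ (m : ℕ) (R : Set (FreeMonoid (Fin m) × FreeMonoid (Fin m))), R.Finite ∧
      ¬ ComputablePred fun p : List (Fin m) × List (Fin m) =>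
          conGen (fun x y : FreeMonoid (Fin m) => (x, y) ∈ R)
            (FreeMonoid.ofList p.1) (FreeMonoid.ofList p.2) := by
  obtain ⟨m, R, hR, hred⟩ :=
    exists_manyOneReducible_wordProblem (ComputablePred.halting_problem_re 0)
  exact ⟨m, R, hR, fun h => ComputablePred.halting_problem 0
    (ComputablePred.computable_of_manyOneReducible hred h)⟩
end

section
/- (Hamilton 1856, Dyck 1882) The group presented by ⟨a, b | a⁵ = b² = (ab)³ = 1⟩, i.e. the quotient of the free group on two generators by the normal closure of {a⁵, b², (ab)³}, is isomorphic (as a group, via a MulEquiv) to the alternating group A₅, the subgroup of even permutations of a five-element set. -/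
/-!
Think of `a` as the rotation of an icosahedron by `2π / 5` about a vertex and of `b` as the
half-turn about the midpoint of an edge at that vertex. The relations force the cosets of `⟨a⟩` to
behave like the 12 vertices of the icosahedron: a pole fixed by `a`, two rings of five, and the
opposite pole. So a group generated by such `a` and `b` has at most `12 * 5 = 60` elements.
Conversely `A₅` is a quotient of the presented group: the five-cycle `(0 1 2 3 4)` and `(0 1)(2 3)`
satisfy the relations, and they generate `A₅` by Jordan's theorem, because their product is a
three-cycle and a transitive group of prime degree is primitive.
-/

open Equiv
open scoped Pointwise

section Group

variable {G : Type*} [Group G]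

theorem pow_finVal_add {n : ℕ} [NeZero n] {a : G} (ha : a ^ n = 1) (i j : Fin n) :
    a ^ (↑(i + j) : ℕ) = a ^ (i : ℕ) * a ^ (j : ℕ) := by
  rw [Fin.val_add, ← pow_eq_pow_mod _ ha, pow_add]

theorem smul_eq_of_smul_eq_of_sq_eq_one {α : Type*} [MulAction G α] {b : G} (hb : b ^ 2 = 1)
    {x y : α} (h : b • x = y) : b • y = x := by
  rw [← h, smul_smul, ← sq, hb, one_smul]

theorem eq_univ_of_forall_smul_subset {α : Type*} [MulAction G α] [MulAction.IsPretransitive G α]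
    {S : Set G} (hS : Subgroup.closure S = ⊤) {s : Set α} (hs : s.Finite) (hne : s.Nonempty)
    (h : ∀ g ∈ S, g • s ⊆ s) : s = Set.univ := by
  have hle : Subgroup.closure S ≤ MulAction.stabilizer G s := (Subgroup.closure_le _).2 fun g hg ↦
    (MulAction.mem_stabilizer_set_iff_smul_set_subset hs).2 (h g hg)
  obtain ⟨x, hx⟩ := hne
  refine Set.eq_univ_of_forall fun y ↦ ?_
  obtain ⟨g, rfl⟩ := MulAction.exists_smul_eq G x y
  have hg : g • s = s := hle (hS ▸ Subgroup.mem_top g)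
  exact hg ▸ Set.smul_mem_smul_set hx

end Group

/-- The vertices of the icosahedron, seen from the axis of a rotation of order five: the two poles
on the axis, and the ring of five neighbours of each pole. -/
inductive IcosahedronVertex
  | north
  | upper (i : Fin 5)
  | lower (i : Fin 5)
  | south
  deriving Fintype

namespace IcosahedronVertex

/-- The effect on the vertices of the rotation of order five fixing the poles. -/
def rotate : IcosahedronVertex → IcosahedronVertex
  | north => north
  | upper i => upper (i + 1)
  | lower i => lower (i + 1)
  | south => south

/-- The effect on the vertices of the half-turn exchanging the ends of the edge from `north` to
`upper 0`. -/
def flip : IcosahedronVertex → IcosahedronVertex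
  | north => upper 0
  | upper 0 => north
  | upper 1 => upper 4
  | upper 2 => lower 0
  | upper 3 => lower 1
  | upper 4 => upper 1
  | lower 0 => upper 2
  | lower 1 => upper 3
  | lower 2 => lower 4
  | lower 3 => south
  | lower 4 => lower 2
  | south => lower 3

/-- The position of each vertex in a `G`-set in which `a` acts as `rotate`, `b` acts as `flip` and
`x` is the north pole. -/
def position {G α : Type*} [Group G] [MulAction G α] (a b : G) (x : α) : IcosahedronVertex → α
  | north => x
  | upper i => (a ^ (i : ℕ) * b) • x
  | lower i => (a ^ (i : ℕ) * b * a ^ 2 * b) • x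
  | south => (b * a ^ 3 * b * a ^ 2 * b) • x

theorem card_eq_twelve : Nat.card IcosahedronVertex = 12 := by
  rw [Nat.card_eq_fintype_card]; rfl

section Relations

variable {G : Type*} [Group G] {a b : G}

theorem conj_rotation (hb : b ^ 2 = 1) (hab : (a * b) ^ 3 = 1) :
    b * a * b = a⁻¹ * b * a⁻¹ := by
  have hbinv : b⁻¹ = b := inv_eq_of_mul_eq_one_left (by rw [← sq, hb])
  calc b * a * b = a⁻¹ * (a * b) ^ 3 * b⁻¹ * a⁻¹ := by simp [pow_succ, mul_assoc]
    _ = a⁻¹ * b * a⁻¹ := by rw [hab, mul_one, hbinv]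

theorem conj_rotation_inv (hb : b ^ 2 = 1) (hab : (a * b) ^ 3 = 1) :
    b * a⁻¹ * b = a * b * a := by
  have hbinv : b⁻¹ = b := inv_eq_of_mul_eq_one_left (by rw [← sq, hb])
  simpa [mul_assoc, hbinv] using congrArg (·⁻¹) (conj_rotation hb hab)

theorem conj_rotation_sq (hb : b ^ 2 = 1) (hab : (a * b) ^ 3 = 1) :
    b * a ^ 2 * b = a⁻¹ * b * a⁻¹ ^ 2 * b * a⁻¹ := by
  calc b * a ^ 2 * b = b * a * b * (b ^ 2)⁻¹ * (b * a * b) := by simp [sq, mul_assoc]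
    _ = a⁻¹ * b * a⁻¹ * (a⁻¹ * b * a⁻¹) := by rw [hb, inv_one, mul_one, conj_rotation hb hab]
    _ = a⁻¹ * b * a⁻¹ ^ 2 * b * a⁻¹ := by group

theorem conj_rotation_cube (ha : a ^ 5 = 1) (hb : b ^ 2 = 1) (hab : (a * b) ^ 3 = 1) :
    b * a ^ 3 * b = a * b * a ^ 2 * b * a := by
  calc b * a ^ 3 * b = b * (a ^ 5 * a⁻¹ ^ 2) * b := by group
    _ = b * a⁻¹ * b * (b ^ 2)⁻¹ * (b * a⁻¹ * b) := by rw [ha]; group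
    _ = a * b * a * (a * b * a) := by rw [hb, inv_one, mul_one, conj_rotation_inv hb hab]
    _ = a * b * a ^ 2 * b * a := by simp only [sq, mul_assoc]

theorem rotation_mul_south_mul_rotation (ha : a ^ 5 = 1) (hb : b ^ 2 = 1)
    (hab : (a * b) ^ 3 = 1) :
    a * (b * a ^ 3 * b * a ^ 2 * b) * a = b * a ^ 3 * b * a ^ 2 * b := by
  have hcube := conj_rotation_cube ha hb hab
  calc a * (b * a ^ 3 * b * a ^ 2 * b) * a
      = a * b * a ^ 2 * (a * b * a ^ 2 * b * a) := by group
    _ = a * b * a ^ 2 * (b * a ^ 3 * b) := by rw [hcube]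
    _ = a * b * a ^ 2 * b * a * a ^ 2 * b := by group
    _ = b * a ^ 3 * b * a ^ 2 * b := by rw [← hcube]

theorem flip_mul_upper_one (ha : a ^ 5 = 1) (hb : b ^ 2 = 1) (hab : (a * b) ^ 3 = 1) :
    b * (a * b) = a ^ 4 * b * a⁻¹ := by
  have hainv : a ^ 4 = a⁻¹ := eq_inv_of_mul_eq_one_left (by rw [← pow_succ, ha])
  rw [← mul_assoc, conj_rotation hb hab, hainv]

theorem flip_mul_lower_two (ha : a ^ 5 = 1) (hb : b ^ 2 = 1) (hab : (a * b) ^ 3 = 1) :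
    b * (a ^ 2 * b * a ^ 2 * b) = a ^ 4 * b * a ^ 2 * b * a⁻¹ := by
  calc b * (a ^ 2 * b * a ^ 2 * b) = b * a ^ 2 * b * a ^ 2 * b := by group
    _ = a⁻¹ * b * a⁻¹ ^ 2 * (b * a * b) := by rw [conj_rotation_sq hb hab]; group
    _ = a⁻¹ * b * a⁻¹ ^ 3 * b * a⁻¹ := by rw [conj_rotation hb hab]; group
    _ = (a ^ 5)⁻¹ * a ^ 4 * b * (a ^ 5)⁻¹ * a ^ 2 * b * a⁻¹ := by group
    _ = a ^ 4 * b * a ^ 2 * b * a⁻¹ := by rw [ha]; group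

end Relations

section Action

variable {G α : Type*} [Group G] [MulAction G α] {a b : G} {x : α}

theorem smul_position_rotate (ha : a ^ 5 = 1) (hb : b ^ 2 = 1) (hab : (a * b) ^ 3 = 1)
    (hx : a • x = x) (v : IcosahedronVertex) :
    a • position a b x v = position a b x v.rotate := by
  have hadd (i : Fin 5) : a ^ (↑(i + 1) : ℕ) = a * a ^ (i : ℕ) := by
    rw [add_comm, pow_finVal_add ha, Fin.val_one, pow_one]
  cases v with
  | north => exact hx
  | upper i => simp only [rotate, position, smul_smul, hadd, mul_assoc]
  | lower i => simp only [rotate, position, smul_smul, hadd, mul_assoc]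
  | south =>
    simp only [rotate, position]
    conv_rhs => rw [← rotation_mul_south_mul_rotation ha hb hab, mul_smul, hx, mul_smul]

theorem smul_position_flip (ha : a ^ 5 = 1) (hb : b ^ 2 = 1) (hab : (a * b) ^ 3 = 1)
    (hx : a • x = x) (v : IcosahedronVertex) :
    b • position a b x v = position a b x v.flip := by
  have hxinv : a⁻¹ • x = x := inv_smul_eq_iff.2 hx.symm
  have flip_back {v w : IcosahedronVertex} (h : b • position a b x v = position a b x w) :
      b • position a b x w = position a b x v := smul_eq_of_smul_eq_of_sq_eq_one hb h
  have north_upper : b • position a b x north = position a b x (upper 0) := by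
    simp [position]
  have upper_upper : b • position a b x (upper 1) = position a b x (upper 4) := by
    change b • (a ^ 1 * b) • x = (a ^ 4 * b) • x
    rw [smul_smul, pow_one, flip_mul_upper_one ha hb hab, mul_smul, hxinv]
  have upper_two_lower : b • position a b x (upper 2) = position a b x (lower 0) := by
    simp [position, smul_smul, mul_assoc]
  have upper_three_lower : b • position a b x (upper 3) = position a b x (lower 1) := by
    change b • (a ^ 3 * b) • x = (a ^ 1 * b * a ^ 2 * b) • x
    rw [smul_smul, ← mul_assoc, conj_rotation_cube ha hb hab, mul_smul, hx, pow_one]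
  have lower_lower : b • position a b x (lower 2) = position a b x (lower 4) := by
    change b • (a ^ 2 * b * a ^ 2 * b) • x = (a ^ 4 * b * a ^ 2 * b) • x
    rw [smul_smul, flip_mul_lower_two ha hb hab, mul_smul, hxinv]
  have lower_south : b • position a b x (lower 3) = position a b x south := by
    simp only [position, smul_smul, mul_assoc]; rfl
  rcases v with _ | i | i | _
  · exact north_upper
  · fin_cases i
    exacts [flip_back north_upper, upper_upper, upper_two_lower, upper_three_lower,
      flip_back upper_upper]
  · fin_cases i
    exacts [flip_back upper_two_lower, flip_back upper_three_lower, lower_lower, lower_south,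
      flip_back lower_lower]
  · exact flip_back lower_south

theorem position_surjective [MulAction.IsPretransitive G α] (ha : a ^ 5 = 1) (hb : b ^ 2 = 1)
    (hab : (a * b) ^ 3 = 1) (hgen : Subgroup.closure {a, b} = ⊤) (hx : a • x = x) :
    Function.Surjective (position a b x) := by
  rw [← Set.range_eq_univ]
  refine eq_univ_of_forall_smul_subset hgen (Set.finite_range _) ⟨x, north, rfl⟩ ?_
  rintro g (rfl | rfl) _ ⟨_, ⟨v, rfl⟩, rfl⟩
  · exact ⟨v.rotate, (smul_position_rotate ha hb hab hx v).symm⟩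
  · exact ⟨v.flip, (smul_position_flip ha hb hab hx v).symm⟩

end Action

end IcosahedronVertex

section Card

open IcosahedronVertex

variable {G : Type*} [Group G] {a b : G}

theorem position_zpowers_surjective (ha : a ^ 5 = 1) (hb : b ^ 2 = 1) (hab : (a * b) ^ 3 = 1)
    (hgen : Subgroup.closure {a, b} = ⊤) :
    Function.Surjective (position a b ((1 : G) : G ⧸ Subgroup.zpowers a)) := by
  refine position_surjective ha hb hab hgen ?_
  rw [MulAction.Quotient.smul_coe, smul_eq_mul, mul_one, QuotientGroup.eq]
  simp

theorem finite_of_icosahedral_relations (ha : a ^ 5 = 1) (hb : b ^ 2 = 1) (hab : (a * b) ^ 3 = 1)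
    (hgen : Subgroup.closure {a, b} = ⊤) : Finite G := by
  have : Finite (G ⧸ Subgroup.zpowers a) :=
    .of_surjective _ (position_zpowers_surjective ha hb hab hgen)
  have hfin : IsOfFinOrder a := isOfFinOrder_iff_pow_eq_one.2 ⟨5, by norm_num, ha⟩
  apply Nat.finite_of_card_ne_zero
  rw [← (Subgroup.zpowers a).card_mul_index, Nat.card_zpowers]
  exact mul_ne_zero hfin.orderOf_pos.ne' Subgroup.index_ne_zero_of_finite

theorem natCard_le_sixty_of_icosahedral_relations (ha : a ^ 5 = 1) (hb : b ^ 2 = 1)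
    (hab : (a * b) ^ 3 = 1) (hgen : Subgroup.closure {a, b} = ⊤) : Nat.card G ≤ 60 := by
  have hindex : (Subgroup.zpowers a).index ≤ 12 := card_eq_twelve ▸
    Nat.card_le_card_of_surjective _ (position_zpowers_surjective ha hb hab hgen)
  calc Nat.card G = orderOf a * (Subgroup.zpowers a).index := by
        rw [← (Subgroup.zpowers a).card_mul_index, Nat.card_zpowers]
    _ ≤ 5 * 12 := Nat.mul_le_mul (orderOf_le_of_pow_eq_one (by norm_num) ha) hindex

end Card

section Perm

variable {α : Type*} [Fintype α] [DecidableEq α]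

theorem isPretransitive_of_isCycle_mem {H : Subgroup (Perm α)} {c : Perm α} (hc : c.IsCycle)
    (hsupp : c.support = Finset.univ) (hcH : c ∈ H) : MulAction.IsPretransitive H α where
  exists_smul_eq x y := by
    have hmoved (z : α) : c z ≠ z := Perm.mem_support.1 (hsupp ▸ Finset.mem_univ z)
    obtain ⟨n, hn⟩ := hc.sameCycle (hmoved x) (hmoved y)
    exact ⟨⟨c ^ n, H.zpow_mem hcH n⟩, hn⟩

theorem alternatingGroup_le_of_isCycle_mem_of_isThreeCycle_mem (hα : (Nat.card α).Prime)
    {H : Subgroup (Perm α)} {c t : Perm α} (hc : c.IsCycle) (hsupp : c.support = Finset.univ)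
    (hcH : c ∈ H) (ht : t.IsThreeCycle) (htH : t ∈ H) : alternatingGroup α ≤ H :=
  have := isPretransitive_of_isCycle_mem hc hsupp hcH
  Perm.alternatingGroup_le_of_isPreprimitive_of_isThreeCycle_mem (.of_prime_card hα) ht htH

theorem closure_finRotate_swap_mul_swap :
    Subgroup.closure {finRotate 5, swap 0 1 * swap 2 3} = alternatingGroup (Fin 5) := by
  apply le_antisymm
  · rw [Subgroup.closure_le]
    rintro _ (rfl | rfl) <;> exact Perm.mem_alternatingGroup.2 (by decide)
  · have hrot : finRotate 5 ∈ Subgroup.closure {finRotate 5, swap 0 1 * swap 2 3} :=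
      Subgroup.subset_closure (.inl rfl)
    have hthree : (finRotate 5 * (swap 0 1 * swap 2 3)).IsThreeCycle :=
      card_support_eq_three_iff.1 (by decide)
    exact alternatingGroup_le_of_isCycle_mem_of_isThreeCycle_mem (by norm_num)
      isCycle_finRotate support_finRotate hrot hthree
      (mul_mem hrot (Subgroup.subset_closure (.inr rfl)))

end Perm

/-- The ordinary triangle group (von Dyck group) `⟨a, b ∣ aᵖ = b^q = (ab)ʳ = 1⟩`, with `a` and `b`
encoded as the generators `0` and `1`. -/
abbrev VonDyckGroup (p q r : ℕ) : Type :=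
  PresentedGroup ({FreeGroup.of 0 ^ p, FreeGroup.of 1 ^ q,
    (FreeGroup.of 0 * FreeGroup.of 1) ^ r} : Set (FreeGroup (Fin 2)))

namespace VonDyckGroup

variable {p q r : ℕ}

/-- The generator of order dividing `p`. -/
def a : VonDyckGroup p q r := PresentedGroup.of 0

/-- The generator of order dividing `q`. -/
def b : VonDyckGroup p q r := PresentedGroup.of 1

theorem a_pow : (a : VonDyckGroup p q r) ^ p = 1 :=
  PresentedGroup.one_of_mem (x := FreeGroup.of 0 ^ p) (by simp)

theorem b_pow : (b : VonDyckGroup p q r) ^ q = 1 :=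
  PresentedGroup.one_of_mem (x := FreeGroup.of 1 ^ q) (by simp)

theorem a_mul_b_pow : (a * b : VonDyckGroup p q r) ^ r = 1 :=
  PresentedGroup.one_of_mem (x := (FreeGroup.of 0 * FreeGroup.of 1) ^ r) (by simp)

theorem closure_a_b : Subgroup.closure {a, b} = (⊤ : Subgroup (VonDyckGroup p q r)) := by
  rw [← PresentedGroup.closure_range_of]
  congr 1
  ext g
  simp [Fin.exists_fin_two, eq_comm, a, b]

/-- The homomorphism out of a von Dyck group given by two elements satisfying its relations. -/
def lift {G : Type*} [Group G] (x y : G) (hx : x ^ p = 1) (hy : y ^ q = 1)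
    (hxy : (x * y) ^ r = 1) : VonDyckGroup p q r →* G :=
  PresentedGroup.toGroup (f := ![x, y]) <| by
    rintro _ (rfl | rfl | rfl)
    exacts [by simpa using hx, by simpa using hy, by simpa using hxy]

theorem range_lift {G : Type*} [Group G] {x y : G} (hx : x ^ p = 1) (hy : y ^ q = 1)
    (hxy : (x * y) ^ r = 1) : (lift x y hx hy hxy).range = Subgroup.closure {x, y} := by
  have ha : lift x y hx hy hxy a = x := PresentedGroup.toGroup.of _
  have hb : lift x y hx hy hxy b = y := PresentedGroup.toGroup.of _
  rw [MonoidHom.range_eq_map, ← closure_a_b, MonoidHom.map_closure, Set.image_pair, ha, hb]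

/-- The action of the von Dyck group `(5, 2, 3)` on five points, sending `a` to `(0 1 2 3 4)` and
`b` to `(0 1)(2 3)`. -/
def toPermFive : VonDyckGroup 5 2 3 →* Perm (Fin 5) :=
  lift (finRotate 5) (swap 0 1 * swap 2 3) (by decide) (by decide) (by decide)

theorem range_toPermFive : toPermFive.range = alternatingGroup (Fin 5) :=
  (range_lift _ _ _).trans closure_finRotate_swap_mul_swap

theorem toPermFive_injective : Function.Injective toPermFive := by
  have hfinite : Finite (VonDyckGroup 5 2 3) :=
    finite_of_icosahedral_relations a_pow b_pow a_mul_b_pow closure_a_b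
  have hcard_le : Nat.card (VonDyckGroup 5 2 3) ≤ 60 :=
    natCard_le_sixty_of_icosahedral_relations a_pow b_pow a_mul_b_pow closure_a_b
  have hcard_range : Nat.card toPermFive.range = 60 := by
    rw [range_toPermFive, nat_card_alternatingGroup, Nat.card_fin]; rfl
  have hbij : Function.Bijective toPermFive.rangeRestrict :=
    toPermFive.rangeRestrict_surjective.bijective_of_nat_card_le (hcard_range ▸ hcard_le)
  exact toPermFive.rangeRestrict_injective_iff.1 hbij.injective

end VonDyckGroup

/-- **Hamilton (1856), Dyck (1882):** the group `⟨a, b ∣ a⁵ = b² = (ab)³ = 1⟩`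
is isomorphic to the alternating group `A₅`. -/
theorem presented_group_iso_alternating_group_A5 :
    Nonempty
      (PresentedGroup
          ({(FreeGroup.of 0) ^ 5, (FreeGroup.of 1) ^ 2,
            (FreeGroup.of 0 * FreeGroup.of 1) ^ 3} : Set (FreeGroup (Fin 2))) ≃*
        alternatingGroup (Fin 5)) :=
  ⟨(MonoidHom.ofInjective VonDyckGroup.toPermFive_injective).trans
    (MulEquiv.subgroupCongr VonDyckGroup.range_toPermFive)⟩
end
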